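/- arXiv:1201.2861 — 2 statements merged into one kernel-verified Lean document; each statement's English description precedes it below -/
import Mathlib

section
/- Let g∈𝒮 satisfy |g'(x)·(x−c_g)| ≤ |g'(x'_g)·(x'_g−c_g)| for every x∈(c_g,1]. Then for every ν>1 such that the map ν·g sends [0,1] into itself, I_{ν·g} ⊇ I_g. -/
open Set Function

/-- The function χ_g: 1/2 where (g(x)−x)(g(g(x))−g(x)) ≤ 0, and 0 otherwise. -/
noncomputable def chi (g : ℝ → ℝ) (x : ℝ) : ℝ :=
  if (g x - x) * (g (g x) - g x) ≤ 0 then 1 / 2 else 0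

/-- Over-rotation number of a periodic point `y` of `g`. -/
noncomputable def overRotNum (g : ℝ → ℝ) (y : ℝ) : ℝ :=
  (∑ i ∈ Finset.range (Function.minimalPeriod g y), chi g (g^[i] y)) /
    (Function.minimalPeriod g y : ℝ)

/-- The over-rotation interval of `g` on the domain `s`: the closure of the set of
over-rotation numbers of periodic non-fixed points of `g` in `s`. -/
def overRotInterval (g : ℝ → ℝ) (s : Set ℝ) : Set ℝ :=
  closure { r : ℝ | ∃ y ∈ s, y ∈ Function.periodicPts g ∧ g y ≠ y ∧ overRotNum g y = r }

/-- `f` is piecewise monotone on `[a,b]`. -/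
def PiecewiseMonotoneOn (f : ℝ → ℝ) (a b : ℝ) : Prop :=
  ∃ n : ℕ, ∃ t : Fin (n + 1) → ℝ, StrictMono t ∧ t 0 = a ∧ t (Fin.last n) = b ∧
    ∀ i : Fin n, MonotoneOn f (Set.Icc (t i.castSucc) (t i.succ)) ∨
      AntitoneOn f (Set.Icc (t i.castSucc) (t i.succ))


/-- The class 𝒮: concave maps of `[0,1]` into itself with `f(0)=f(1)=0`, a unique turning
point `c ∈ (0,1)` which is a maximum with `f(c) > c`, and `C¹` on `[0,c]` and on `[c,1]`. -/
structure SClass (f : ℝ → ℝ) (c : ℝ) : Prop where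
  maps : Set.MapsTo f (Set.Icc 0 1) (Set.Icc 0 1)
  f0 : f 0 = 0
  f1 : f 1 = 0
  hc : c ∈ Set.Ioo (0:ℝ) 1
  concave : ConcaveOn ℝ (Set.Icc 0 1) f
  mono : StrictMonoOn f (Set.Icc 0 c)
  anti : StrictAntiOn f (Set.Icc c 1)
  fcgt : c < f c
  smoothL : ContDiffOn ℝ 1 f (Set.Icc 0 c)
  smoothR : ContDiffOn ℝ 1 f (Set.Icc c 1)

/-!
Let `a` and `b` be the fixed points of `g` and `f = ν g` on their decreasing laps, and stretch
`[c, a]` affinely about `c` onto `[c, b]`. Concavity on the decreasing lap, and concavity together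
with the derivative condition on the increasing one, show that in this coordinate `f` throws points
farther from its fixed point than `g` does. Attaching to each point of a cycle of `g` an interval on
one lap of `f` and on the same side of the fixed point, one finds that `f` maps each interval over
the next, so composing inverse branches gives a cycle of `f` with the same itinerary. The
over-rotation number only depends on the sides of the fixed point visited. If the cycle alternates
sides, the point found could be the fixed point `b`; but then the over-rotation number is `1 / 2`,
and `f` has a cycle of period `2`.
-/

open scoped Topology

section Topology

variable {X Y : Type*} [TopologicalSpace X] [TopologicalSpace Y] [T2Space Y]

lemma continuousOn_invFunOn_image [Nonempty X] {f : X → Y} {s : Set X} (hs : IsCompact s)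
    (hf : ContinuousOn f s) (hinj : InjOn f s) : ContinuousOn (invFunOn f s) (f '' s) := by
  refine continuousOn_iff_isClosed.2 fun t ht ↦
    ⟨f '' (s ∩ t), ((hs.inter_right ht).image_of_continuousOn
      (hf.mono inter_subset_left)).isClosed, ?_⟩
  ext z
  constructor
  · rintro ⟨hzt, hz⟩
    exact ⟨⟨_, ⟨invFunOn_mem hz, hzt⟩, invFunOn_eq hz⟩, hz⟩
  · rintro ⟨⟨x, ⟨hxs, hxt⟩, rfl⟩, hz⟩
    exact ⟨by rwa [mem_preimage, hinj.leftInvOn_invFunOn hxs], hz⟩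

lemma hasDerivAt_invFunOn {𝕜 : Type*} [NontriviallyNormedField 𝕜] {f : 𝕜 → 𝕜} {s : Set 𝕜}
    {f' p : 𝕜} (hs : IsCompact s) (hf : ContinuousOn f s) (hinj : InjOn f s) (hp : p ∈ s)
    (himage : f '' s ∈ 𝓝 (f p)) (hf' : HasDerivAt f f' p) (hne : f' ≠ 0) :
    HasDerivAt (invFunOn f s) f'⁻¹ (f p) := by
  have hleft : invFunOn f s (f p) = p := hinj.leftInvOn_invFunOn hp
  refine .of_local_left_inverse
    ((continuousOn_invFunOn_image hs hf hinj).continuousAt himage) (hleft.symm ▸ hf') hne ?_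
  filter_upwards [himage] with z hz using invFunOn_eq hz

/-- The section `σ` is the composition of the inverse branches of `f` along the chain `J`. -/
lemma exists_continuousOn_section_of_covering [T2Space X] {f : X → X} {J : ℕ → Set X}
    (hcompact : ∀ i, IsCompact (J i)) (hcont : ∀ i, ContinuousOn f (J i))
    (hinj : ∀ i, InjOn f (J i)) (hcover : ∀ i, J (i + 1) ⊆ f '' J i) (n : ℕ) :
    ∃ σ : X → X, ContinuousOn σ (J n) ∧
      ∀ z ∈ J n, f^[n] (σ z) = z ∧ ∀ i ≤ n, f^[i] (σ z) ∈ J i := by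
  induction n with
  | zero => exact ⟨id, continuousOn_id, fun z hz ↦ ⟨rfl, fun i hi ↦ by simpa [Nat.le_zero.1 hi]⟩⟩
  | succ n ih =>
    obtain ⟨σ, hσ, hit⟩ := ih
    rcases isEmpty_or_nonempty X with hX | hX
    · exact ⟨id, continuousOn_id, fun z ↦ isEmptyElim z⟩
    set τ := invFunOn f (J n)
    have hτ : ContinuousOn τ (J (n + 1)) :=
      (continuousOn_invFunOn_image (hcompact n) (hcont n) (hinj n)).mono (hcover n)
    have hmaps : MapsTo τ (J (n + 1)) (J n) := fun z hz ↦ invFunOn_mem (hcover n hz)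
    refine ⟨σ ∘ τ, hσ.comp hτ hmaps, fun z hz ↦ ?_⟩
    have hlast : f^[n + 1] ((σ ∘ τ) z) = z := by
      rw [iterate_succ_apply', comp_apply, (hit _ (hmaps hz)).1]
      exact invFunOn_eq (hcover n hz)
    refine ⟨hlast, fun i hi ↦ ?_⟩
    rcases hi.lt_or_eq with hlt | rfl
    · exact (hit _ (hmaps hz)).2 i (Nat.lt_succ_iff.1 hlt)
    · rwa [hlast]

lemma exists_isPeriodicPt_of_covering {α : Type*} [TopologicalSpace α]
    [ConditionallyCompleteLinearOrder α] [OrderTopology α] [DenselyOrdered α] {f : α → α}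
    {J : ℕ → Set α} {q : ℕ} (hq : 0 < q)
    (hper : Periodic J q) (hIcc : ∀ i, ∃ u v, u ≤ v ∧ J i = Icc u v)
    (hcont : ∀ i, ContinuousOn f (J i)) (hinj : ∀ i, InjOn f (J i))
    (hcover : ∀ i, J (i + 1) ⊆ f '' J i) :
    ∃ w, IsPeriodicPt f q w ∧ ∀ i, f^[i] w ∈ J i := by
  have hcompact : ∀ i, IsCompact (J i) := fun i ↦ by
    obtain ⟨u, v, -, hJ⟩ := hIcc i
    exact hJ ▸ isCompact_Icc
  obtain ⟨σ, hσ, hit⟩ := exists_continuousOn_section_of_covering hcompact hcont hinj hcover q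
  rw [show J q = J 0 by simpa only [zero_add] using hper 0] at hσ hit
  obtain ⟨u, v, huv, hJ⟩ := hIcc 0
  obtain ⟨w, hw, hfix⟩ : ∃ w ∈ Icc u v, σ w = w :=
    exists_mem_Icc_isFixedPt_of_mapsTo (hJ ▸ hσ) huv
      (hJ ▸ fun z hz ↦ (hit z hz).2 0 q.zero_le)
  obtain ⟨hwq, hmem⟩ := hit w (hJ ▸ hw)
  rw [hfix] at hwq hmem
  refine ⟨w, hwq, fun i ↦ ?_⟩
  rw [← IsPeriodicPt.iterate_mod_apply hwq i, ← hper.map_mod_nat i]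
  exact hmem _ (Nat.mod_lt i hq).le

end Topology

section Periodic

lemma birkhoffSum_mul_of_isPeriodicPt {α M : Type*} [AddCommMonoid M] {f : α → α} {x : α} {n : ℕ}
    (hx : IsPeriodicPt f n x) (φ : α → M) (k : ℕ) :
    birkhoffSum f φ (n * k) x = k • birkhoffSum f φ n x := by
  induction k with
  | zero => simp
  | succ k ih => rw [Nat.mul_succ, birkhoffSum_add, ih, (hx.mul_const k).eq, succ_nsmul]

lemma exists_map_iterate_le_of_isPeriodicPt {α : Type*} [LinearOrder α] {f : α → α} {x : α} {q : ℕ}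
    (hq : 0 < q) (hx : IsPeriodicPt f q x) : ∃ i, f (f^[i] x) ≤ f^[i] x := by
  by_contra! hlt
  have hmono : StrictMono fun i ↦ f^[i] x :=
    strictMono_nat_of_lt_succ fun i ↦ by simpa only [iterate_succ_apply'] using hlt i
  exact (hmono hq).ne' hx

/-- A nontrivial cycle: `y` is a non-fixed point of `f` whose orbit has period `q`, not necessarily
the minimal one, and stays in `s`. -/
structure IsCycleIn {α : Type*} (f : α → α) (s : Set α) (q : ℕ) (y : α) : Prop where
  period_pos : 0 < q
  isPeriodicPt : IsPeriodicPt f q y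
  iterate_mem : ∀ i, f^[i] y ∈ s
  map_ne : f y ≠ y

namespace IsCycleIn

variable {α : Type*} {f : α → α} {s : Set α} {q : ℕ} {y : α}

lemma mem (hy : IsCycleIn f s q y) : y ∈ s := hy.iterate_mem 0

lemma map_mem (hy : IsCycleIn f s q y) : f y ∈ s := hy.iterate_mem 1

lemma mem_periodicPts (hy : IsCycleIn f s q y) : y ∈ periodicPts f :=
  mk_mem_periodicPts hy.period_pos hy.isPeriodicPt

lemma ne_of_map_eq (hy : IsCycleIn f s q y) {z : α} (hz : f z = z) : y ≠ z := by
  rintro rfl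
  exact hy.map_ne hz

lemma iterate (hy : IsCycleIn f s q y) (i : ℕ) : IsCycleIn f s q (f^[i] y) where
  period_pos := hy.period_pos
  isPeriodicPt := hy.isPeriodicPt.apply_iterate i
  iterate_mem j := by
    rw [← iterate_add_apply]
    exact hy.iterate_mem _
  map_ne h := hy.map_ne <| by
    have hmin := minimalPeriod_eq_one_iff_isFixedPt.2 h
    rw [minimalPeriod_apply_iterate hy.mem_periodicPts] at hmin
    exact minimalPeriod_eq_one_iff_isFixedPt.1 hmin

lemma map (hy : IsCycleIn f s q y) : IsCycleIn f s q (f y) := hy.iterate 1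

end IsCycleIn

end Periodic

section OverRotation

variable {f : ℝ → ℝ} {s : Set ℝ} {q : ℕ} {y : ℝ}

lemma overRotNum_eq_birkhoffSum_div (hq : 0 < q) (hy : IsPeriodicPt f q y) :
    overRotNum f y = birkhoffSum f (chi f) q y / q := by
  obtain ⟨k, rfl⟩ := hy.minimalPeriod_dvd
  have hk : (k : ℝ) ≠ 0 := Nat.cast_ne_zero.2 (Nat.pos_of_mul_pos_left hq).ne'
  rw [birkhoffSum_mul_of_isPeriodicPt (isPeriodicPt_minimalPeriod f y), overRotNum, nsmul_eq_mul,
    Nat.cast_mul, mul_comm (k : ℝ), mul_div_mul_right _ _ hk, birkhoffSum]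

lemma overRotNum_eq_half (hq : 0 < q) (hy : IsPeriodicPt f q y)
    (hchi : ∀ i, chi f (f^[i] y) = 1 / 2) : overRotNum f y = 1 / 2 := by
  have hq' : (q : ℝ) ≠ 0 := Nat.cast_ne_zero.2 hq.ne'
  rw [overRotNum_eq_birkhoffSum_div hq hy, birkhoffSum, Finset.sum_congr rfl fun i _ ↦ hchi i,
    Finset.sum_const, Finset.card_range, nsmul_eq_mul, mul_div_cancel_left₀ _ hq']

lemma chi_eq_half_of_isPeriodicPt_two (hy : IsPeriodicPt f 2 y) : chi f y = 1 / 2 := by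
  have hffy : f (f y) = y := hy
  rw [chi, hffy, if_pos]
  linarith [mul_self_nonneg (f y - y)]

lemma overRotNum_eq_half_of_isPeriodicPt_two (hy : IsPeriodicPt f 2 y) : overRotNum f y = 1 / 2 :=
  overRotNum_eq_half two_pos hy fun i ↦ chi_eq_half_of_isPeriodicPt_two (hy.apply_iterate i)

end OverRotation

/-- A unimodal map of `[0,1]` with turning point `c` and a fixed point `a` on its decreasing lap.
Values above `1` are allowed, so that multiples of a unimodal map are unimodal. -/
structure IsUnimodal (f : ℝ → ℝ) (c a : ℝ) : Prop where
  continuousOn : ContinuousOn f (Icc 0 1)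
  strictMonoOn : StrictMonoOn f (Icc 0 c)
  strictAntiOn : StrictAntiOn f (Icc c 1)
  map_zero : f 0 = 0
  map_one : f 1 = 0
  turning_pos : 0 < c
  turning_lt_fixed : c < a
  fixed_lt_one : a < 1
  map_fixed : f a = a
  lt_map_of_le_turning : ∀ x ∈ Ioc 0 c, x < f x

/-- The point `x'` of the increasing lap `[0,c]` at which `f` takes the same value as at `x`. -/
noncomputable def leftTwin (f : ℝ → ℝ) (c x : ℝ) : ℝ := invFunOn f (Icc 0 c) (f x)

/-- Moving away from the turning point `c` to the right, twins on the left do not move away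
proportionally faster: `(c - x') / (x - c)` decreases with `x`. -/
def TwinRatioAntitone (f : ℝ → ℝ) (c : ℝ) : Prop :=
  AntitoneOn (fun x ↦ (c - leftTwin f c x) / (x - c)) (Ioo c 1)

namespace IsUnimodal

variable {f : ℝ → ℝ} {c a x : ℝ}

lemma turning_lt_one (hf : IsUnimodal f c a) : c < 1 := hf.turning_lt_fixed.trans hf.fixed_lt_one

lemma fixed_pos (hf : IsUnimodal f c a) : 0 < a := hf.turning_pos.trans hf.turning_lt_fixed

lemma Icc_zero_turning_subset (hf : IsUnimodal f c a) : Icc 0 c ⊆ Icc 0 1 :=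
  Icc_subset_Icc_right hf.turning_lt_one.le

lemma Icc_turning_one_subset (hf : IsUnimodal f c a) : Icc c 1 ⊆ Icc 0 1 :=
  Icc_subset_Icc_left hf.turning_pos.le

lemma turning_mem_left (hf : IsUnimodal f c a) : c ∈ Icc 0 c := right_mem_Icc.2 hf.turning_pos.le

lemma turning_mem_right (hf : IsUnimodal f c a) : c ∈ Icc c 1 :=
  left_mem_Icc.2 hf.turning_lt_one.le

lemma fixed_mem_right (hf : IsUnimodal f c a) : a ∈ Icc c 1 :=
  ⟨hf.turning_lt_fixed.le, hf.fixed_lt_one.le⟩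

lemma map_le_map_turning (hf : IsUnimodal f c a) (hx : x ∈ Icc 0 1) : f x ≤ f c := by
  rcases le_total x c with hxc | hcx
  · exact hf.strictMonoOn.monotoneOn ⟨hx.1, hxc⟩ hf.turning_mem_left hxc
  · exact hf.strictAntiOn.antitoneOn hf.turning_mem_right ⟨hcx, hx.2⟩ hcx

lemma map_nonneg (hf : IsUnimodal f c a) (hx : x ∈ Icc 0 1) : 0 ≤ f x := by
  rcases le_total x c with hxc | hcx
  · rw [← hf.map_zero]
    exact hf.strictMonoOn.monotoneOn (left_mem_Icc.2 hf.turning_pos.le) ⟨hx.1, hxc⟩ hx.1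
  · rw [← hf.map_one]
    exact hf.strictAntiOn.antitoneOn ⟨hcx, hx.2⟩ (right_mem_Icc.2 hf.turning_lt_one.le) hx.2

lemma map_le_fixed_iff (hf : IsUnimodal f c a) (hx : x ∈ Icc c 1) : f x ≤ a ↔ a ≤ x := by
  conv_lhs => rw [← hf.map_fixed]
  exact hf.strictAntiOn.le_iff_ge hx hf.fixed_mem_right

lemma fixed_le_map_iff (hf : IsUnimodal f c a) (hx : x ∈ Icc c 1) : a ≤ f x ↔ x ≤ a := by
  conv_lhs => rw [← hf.map_fixed]
  exact hf.strictAntiOn.le_iff_ge hf.fixed_mem_right hx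

lemma map_lt_fixed_iff (hf : IsUnimodal f c a) (hx : x ∈ Icc c 1) : f x < a ↔ a < x := by
  conv_lhs => rw [← hf.map_fixed]
  exact hf.strictAntiOn.lt_iff_gt hx hf.fixed_mem_right

lemma lt_map (hf : IsUnimodal f c a) (hx0 : 0 < x) (hxa : x < a) : x < f x := by
  rcases le_total x c with hxc | hcx
  · exact hf.lt_map_of_le_turning x ⟨hx0, hxc⟩
  · refine hxa.trans_le (le_of_not_gt fun hlt ↦ ?_)
    exact hxa.not_gt ((hf.map_lt_fixed_iff ⟨hcx, (hxa.trans hf.fixed_lt_one).le⟩).1 hlt)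

lemma lt_turning_of_map_lt_fixed (hf : IsUnimodal f c a) (hxa : x < a) (hfx : f x < a) : x < c := by
  by_contra! hcx
  exact hxa.not_gt ((hf.map_lt_fixed_iff ⟨hcx, (hxa.trans hf.fixed_lt_one).le⟩).1 hfx)

lemma leftTwin_mem_and_map_leftTwin (hf : IsUnimodal f c a) (hx : x ∈ Icc 0 1) :
    leftTwin f c x ∈ Icc 0 c ∧ f (leftTwin f c x) = f x := by
  have hrange : f x ∈ f '' Icc 0 c :=
    intermediate_value_Icc hf.turning_pos.le (hf.continuousOn.mono hf.Icc_zero_turning_subset)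
      ⟨hf.map_zero.trans_le (hf.map_nonneg hx), hf.map_le_map_turning hx⟩
  exact ⟨invFunOn_mem hrange, invFunOn_eq hrange⟩

lemma leftTwin_mem (hf : IsUnimodal f c a) (hx : x ∈ Icc 0 1) : leftTwin f c x ∈ Icc 0 c :=
  (hf.leftTwin_mem_and_map_leftTwin hx).1

lemma map_leftTwin (hf : IsUnimodal f c a) (hx : x ∈ Icc 0 1) : f (leftTwin f c x) = f x :=
  (hf.leftTwin_mem_and_map_leftTwin hx).2

lemma leftTwin_mem_Ioo (hf : IsUnimodal f c a) (hx : x ∈ Ioo c 1) : leftTwin f c x ∈ Ioo 0 c := by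
  have hx' : x ∈ Icc c 1 := Ioo_subset_Icc_self hx
  have hx01 : x ∈ Icc 0 1 := hf.Icc_turning_one_subset hx'
  obtain ⟨htwin, hmap⟩ := hf.leftTwin_mem_and_map_leftTwin hx01
  refine ⟨htwin.1.lt_of_ne fun h ↦ ?_, htwin.2.lt_of_ne fun h ↦ ?_⟩
  · have hpos := hf.strictAntiOn hx' (right_mem_Icc.2 hf.turning_lt_one.le) hx.2
    rw [← hmap, ← h, hf.map_zero, hf.map_one] at hpos
    exact hpos.false
  · have hlt := hf.strictAntiOn hf.turning_mem_right hx' hx.1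
    rw [← hmap, h] at hlt
    exact hlt.false

lemma exists_isPeriodicPt_two_of_mapsTo (hf : IsUnimodal f c a) {e : ℝ}
    (hle : leftTwin f c a ≤ e) (hea : e < a) (hmaps : MapsTo f (Icc (leftTwin f c a) e) (Icc 0 1))
    (hffe : f (f e) ≤ e) : ∃ w ∈ Icc 0 1, IsPeriodicPt f 2 w ∧ f w ≠ w := by
  obtain ⟨hpos, hlt⟩ := hf.leftTwin_mem_Ioo ⟨hf.turning_lt_fixed, hf.fixed_lt_one⟩
  have htwin : f (f (leftTwin f c a)) = a := by
    rw [hf.map_leftTwin (hf.Icc_turning_one_subset hf.fixed_mem_right), hf.map_fixed, hf.map_fixed]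
  have hsub : Icc (leftTwin f c a) e ⊆ Icc 0 1 :=
    Icc_subset_Icc hpos.le (hea.trans hf.fixed_lt_one).le
  obtain ⟨w, hw, hfix⟩ := exists_mem_Icc_isFixedPt
    (hf.continuousOn.comp (hf.continuousOn.mono hsub) hmaps) hle
    ((hlt.trans hf.turning_lt_fixed).le.trans_eq htwin.symm) hffe
  exact ⟨w, hsub hw, hfix, (hf.lt_map (hpos.trans_le hw.1) (hw.2.trans_lt hea)).ne'⟩

/-- If `f` exceeds `1`, so that `f ∘ f` leaves the domain, one searches only up to the first point
where `f` equals `1`. -/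
lemma exists_isPeriodicPt_two (hf : IsUnimodal f c a) {u v : ℝ} (hu : u ∈ Ico c a)
    (hv : v ∈ Icc a 1) (hvu : v ≤ f u) (huv : f v ≤ u) :
    ∃ w ∈ Icc 0 1, IsPeriodicPt f 2 w ∧ f w ≠ w := by
  have ha : a ∈ Icc 0 1 := hf.Icc_turning_one_subset hf.fixed_mem_right
  have hp := hf.leftTwin_mem ha
  rcases le_total (f c) 1 with hfc | hfc
  · have hsub : Icc (leftTwin f c a) u ⊆ Icc 0 1 :=
      Icc_subset_Icc hp.1 (hu.2.trans hf.fixed_lt_one).le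
    have hmaps : MapsTo f (Icc (leftTwin f c a) u) (Icc 0 1) := fun x hx ↦
      ⟨hf.map_nonneg (hsub hx), (hf.map_le_map_turning (hsub hx)).trans hfc⟩
    have hle : leftTwin f c a ≤ u := hp.2.trans hu.1
    have hcv : c ≤ v := hf.turning_lt_fixed.le.trans hv.1
    refine hf.exists_isPeriodicPt_two_of_mapsTo hle hu.2 hmaps (le_trans ?_ huv)
    exact hf.strictAntiOn.antitoneOn ⟨hcv, hv.2⟩
      ⟨hcv.trans hvu, (hmaps (right_mem_Icc.2 hle)).2⟩ hvu
  · have hsub : Icc (leftTwin f c a) c ⊆ Icc 0 c := Icc_subset_Icc_left hp.1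
    have hone : (1 : ℝ) ∈ Icc (f (leftTwin f c a)) (f c) := by
      rw [hf.map_leftTwin ha, hf.map_fixed]
      exact ⟨hf.fixed_lt_one.le, hfc⟩
    obtain ⟨e, he, hfe⟩ := intermediate_value_Icc hp.2
      (hf.continuousOn.mono (hsub.trans hf.Icc_zero_turning_subset)) hone
    refine hf.exists_isPeriodicPt_two_of_mapsTo he.1 (he.2.trans_lt hf.turning_lt_fixed)
      (fun x hx ↦ ?_) ?_
    · have hx' : x ∈ Icc 0 c := hsub ⟨hx.1, hx.2.trans he.2⟩
      exact ⟨hf.map_nonneg (hf.Icc_zero_turning_subset hx'),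
        (hf.strictMonoOn.monotoneOn hx' (hsub he) hx.2).trans_eq hfe⟩
    · rw [hfe, hf.map_one]
      exact (hsub he).1

end IsUnimodal

namespace IsUnimodal

variable {f : ℝ → ℝ} {a c x : ℝ}

section Derivative

lemma deriv_pos_of_mem_left (hf : IsUnimodal f c a) (hconc : ConcaveOn ℝ (Icc 0 1) f)
    (hx : x ∈ Ioo 0 c) (hdiff : DifferentiableAt ℝ f x) : 0 < deriv f x := by
  have hx' : x ∈ Icc 0 c := Ioo_subset_Icc_self hx
  have hslope : slope f x c ≤ deriv f x :=
    hconc.slope_le_of_hasDerivAt (hf.Icc_zero_turning_subset hx')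
      (hf.Icc_zero_turning_subset hf.turning_mem_left) hx.2 hdiff.hasDerivAt
  refine lt_of_lt_of_le ?_ hslope
  rw [slope_def_field]
  exact div_pos (sub_pos.2 (hf.strictMonoOn hx' hf.turning_mem_left hx.2)) (sub_pos.2 hx.2)

lemma hasDerivAt_leftTwin (hf : IsUnimodal f c a) (hx : x ∈ Ioo c 1)
    (hdiff : DifferentiableAt ℝ f x) (hdiff' : DifferentiableAt ℝ f (leftTwin f c x))
    (hne : deriv f (leftTwin f c x) ≠ 0) :
    HasDerivAt (leftTwin f c) ((deriv f (leftTwin f c x))⁻¹ * deriv f x) x := by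
  have htwin := hf.leftTwin_mem_Ioo hx
  have htwin' : leftTwin f c x ∈ Icc 0 c := Ioo_subset_Icc_self htwin
  have hmap : f (leftTwin f c x) = f x :=
    hf.map_leftTwin (hf.Icc_turning_one_subset (Ioo_subset_Icc_self hx))
  have hcont : ContinuousOn f (Icc 0 c) := hf.continuousOn.mono hf.Icc_zero_turning_subset
  have himage : f '' Icc 0 c ∈ 𝓝 (f (leftTwin f c x)) := by
    refine Filter.mem_of_superset (Icc_mem_nhds ?_ ?_)
      (intermediate_value_Icc hf.turning_pos.le hcont)
    · exact hf.strictMonoOn (left_mem_Icc.2 hf.turning_pos.le) htwin' htwin.1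
    · exact hf.strictMonoOn htwin' hf.turning_mem_left htwin.2
  have hinv := hasDerivAt_invFunOn isCompact_Icc hcont hf.strictMonoOn.injOn htwin' himage
    hdiff'.hasDerivAt hne
  rw [hmap] at hinv
  exact hinv.comp x hdiff.hasDerivAt

/-- With `x' = leftTwin f c x` one has `dx'/dx = f'(x) / f'(x')`, so the hypothesis on derivatives
says that `(c - x') / (x - c)` has nonpositive derivative. -/
lemma twinRatioAntitone (hf : IsUnimodal f c a) (hconc : ConcaveOn ℝ (Icc 0 1) f)
    (hleft : ∀ x ∈ Ioo 0 c, DifferentiableAt ℝ f x)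
    (hright : ∀ x ∈ Ioo c 1, DifferentiableAt ℝ f x)
    (hderiv : ∀ x ∈ Ioo c 1, |deriv f x * (x - c)| ≤
      |deriv f (leftTwin f c x) * (leftTwin f c x - c)|) :
    TwinRatioAntitone f c := by
  have hpos : ∀ x ∈ Ioo c 1, 0 < deriv f (leftTwin f c x) := fun x hx ↦
    hf.deriv_pos_of_mem_left hconc (hf.leftTwin_mem_Ioo hx) (hleft _ (hf.leftTwin_mem_Ioo hx))
  have hratio : ∀ x ∈ Ioo c 1, HasDerivAt (fun x ↦ (c - leftTwin f c x) / (x - c))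
      ((-((deriv f (leftTwin f c x))⁻¹ * deriv f x) * (x - c) - (c - leftTwin f c x) * 1) /
        (x - c) ^ 2) x := fun x hx ↦
    ((hf.hasDerivAt_leftTwin hx (hright x hx) (hleft _ (hf.leftTwin_mem_Ioo hx))
      (hpos x hx).ne').const_sub c).div ((hasDerivAt_id x).sub_const c) (sub_pos.2 hx.1).ne'
  refine antitoneOn_of_hasDerivWithinAt_nonpos (convex_Ioo c 1)
    (fun x hx ↦ (hratio x hx).continuousAt.continuousWithinAt)
    (fun x hx ↦ (hratio x (interior_subset hx)).hasDerivWithinAt) fun x hx ↦ ?_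
  replace hx : x ∈ Ioo c 1 := interior_subset hx
  refine div_nonpos_of_nonpos_of_nonneg ?_ (sq_nonneg _)
  have habs : |deriv f (leftTwin f c x) * (leftTwin f c x - c)| =
      deriv f (leftTwin f c x) * (c - leftTwin f c x) := by
    rw [abs_mul, abs_of_pos (hpos x hx), abs_sub_comm,
      abs_of_pos (sub_pos.2 (hf.leftTwin_mem_Ioo hx).2)]
  have hle : (deriv f (leftTwin f c x))⁻¹ * -(deriv f x * (x - c)) ≤ c - leftTwin f c x := by
    rw [inv_mul_le_iff₀ (hpos x hx), ← habs]
    exact (neg_le_abs _).trans (hderiv x hx)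
  linarith

end Derivative

end IsUnimodal

section Concave

lemma slope_le_slope_of_concaveOn {𝕜 : Type*} [Field 𝕜] [LinearOrder 𝕜] [IsStrictOrderedRing 𝕜]
    {s : Set 𝕜} {f : 𝕜 → 𝕜} (hf : ConcaveOn 𝕜 s f) {x₁ y₁ x₂ y₂ : 𝕜} (hx₁ : x₁ ∈ s) (hy₁ : y₁ ∈ s)
    (hx₂ : x₂ ∈ s) (hy₂ : y₂ ∈ s) (h₁ : x₁ < y₁) (h₂ : x₂ < y₂) (hx : x₁ ≤ x₂) (hy : y₁ ≤ y₂) :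
    slope f x₂ y₂ ≤ slope f x₁ y₁ :=
  calc
    slope f x₂ y₂ = slope f y₂ x₂ := slope_comm ..
    _ ≤ slope f y₂ x₁ := hf.slope_anti hy₂ ⟨hx₁, (hx.trans_lt h₂).ne⟩ ⟨hx₂, h₂.ne⟩ hx
    _ = slope f x₁ y₂ := slope_comm ..
    _ ≤ slope f x₁ y₁ := hf.slope_anti hx₁ ⟨hy₁, h₁.ne'⟩ ⟨hy₂, (h₁.trans_le hy).ne'⟩ hy

/-- The affine map of slope `l` fixing `c`. For `l = (b - c) / (a - c)` it is the change of
coordinate carrying the fixed point `a` of a unimodal map to the fixed point `b` of a multiple. -/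
def stretch (c l x : ℝ) : ℝ := c + l * (x - c)

/-- The affine change of coordinate `stretch c l`, cut off so as to take values in `[0,1]`. -/
def clampStretch (c l x : ℝ) : ℝ := max 0 (min 1 (stretch c l x))

variable {f : ℝ → ℝ} {s : Set ℝ} {c l x y : ℝ}

lemma stretch_sub_stretch (c l x y : ℝ) : stretch c l y - stretch c l x = l * (y - x) := by
  rw [stretch, stretch]
  ring

lemma stretch_self (c l : ℝ) : stretch c l c = c := by simp [stretch]

lemma strictMono_stretch (hl : 0 < l) : StrictMono (stretch c l) := fun x y hxy ↦ by
  rw [← sub_pos, stretch_sub_stretch]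
  exact mul_pos hl (sub_pos.2 hxy)

lemma stretch_le_self (hl : 1 ≤ l) (hx : x ≤ c) : stretch c l x ≤ x := by
  rw [stretch]
  nlinarith

lemma self_le_stretch (hl : 1 ≤ l) (hx : c ≤ x) : x ≤ stretch c l x := by
  rw [stretch]
  nlinarith

lemma mul_sub_le_map_stretch_sub (hf : ConcaveOn ℝ s f) (hl : 1 ≤ l) (hxy : x ≤ y) (hy : y ≤ c)
    (hxs : x ∈ s) (hys : y ∈ s) (hxs' : stretch c l x ∈ s) (hys' : stretch c l y ∈ s) :
    l * (f y - f x) ≤ f (stretch c l y) - f (stretch c l x) := by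
  rcases hxy.eq_or_lt with rfl | hlt
  · simp
  have hl0 : 0 < l := one_pos.trans_le hl
  have hpos : 0 < y - x := sub_pos.2 hlt
  have hslope := slope_le_slope_of_concaveOn hf hxs' hys' hxs hys (strictMono_stretch hl0 hlt) hlt
    (stretch_le_self hl (hxy.trans hy)) (stretch_le_self hl hy)
  rwa [slope_def_field, slope_def_field, stretch_sub_stretch, ← div_div,
    div_le_div_iff_of_pos_right hpos, le_div_iff₀' hl0] at hslope

lemma map_stretch_sub_le_mul_sub (hf : ConcaveOn ℝ s f) (hl : 1 ≤ l) (hxy : x ≤ y) (hx : c ≤ x)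
    (hxs : x ∈ s) (hys : y ∈ s) (hxs' : stretch c l x ∈ s) (hys' : stretch c l y ∈ s) :
    f (stretch c l y) - f (stretch c l x) ≤ l * (f y - f x) := by
  rcases hxy.eq_or_lt with rfl | hlt
  · simp
  have hl0 : 0 < l := one_pos.trans_le hl
  have hpos : 0 < y - x := sub_pos.2 hlt
  have hslope := slope_le_slope_of_concaveOn hf hxs hys hxs' hys' hlt (strictMono_stretch hl0 hlt)
    (self_le_stretch hl hx) (self_le_stretch hl (hx.trans hxy))
  rwa [slope_def_field, slope_def_field, stretch_sub_stretch, ← div_div,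
    div_le_div_iff_of_pos_right hpos, div_le_iff₀' hl0] at hslope

end Concave

lemma exists_isUnimodal_of_lt_map {f : ℝ → ℝ} {c : ℝ} (hcont : ContinuousOn f (Icc 0 1))
    (hmono : StrictMonoOn f (Icc 0 c)) (hanti : StrictAntiOn f (Icc c 1)) (h0 : f 0 = 0)
    (h1 : f 1 = 0) (hc : c ∈ Ioo 0 1) (hlt : ∀ x ∈ Ioc 0 c, x < f x) : ∃ a, IsUnimodal f c a := by
  have hcf : c < f c := hlt c (right_mem_Ioc.2 hc.1)
  obtain ⟨a, ha, hfix⟩ : ∃ a ∈ Icc c 1, f a = a :=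
    isPreconnected_Icc.intermediate_value₂ (right_mem_Icc.2 hc.2.le) (left_mem_Icc.2 hc.2.le)
      (hcont.mono (Icc_subset_Icc_left hc.1.le)) continuousOn_id (h1.trans_le zero_le_one) hcf.le
  exact ⟨a, {
    continuousOn := hcont
    strictMonoOn := hmono
    strictAntiOn := hanti
    map_zero := h0
    map_one := h1
    turning_pos := hc.1
    turning_lt_fixed := ha.1.lt_of_ne fun h ↦ hcf.ne' (h ▸ hfix)
    fixed_lt_one := ha.2.lt_of_ne fun h ↦ zero_ne_one (h1.symm.trans (h ▸ hfix))
    map_fixed := hfix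
    lt_map_of_le_turning := hlt }⟩

namespace IsUnimodal

variable {g : ℝ → ℝ} {c a ν : ℝ}

lemma exists_const_mul (hg : IsUnimodal g c a) (hν : 1 ≤ ν) :
    ∃ b, a ≤ b ∧ IsUnimodal (fun x ↦ ν * g x) c b := by
  have hν0 : 0 < ν := one_pos.trans_le hν
  have hle : ∀ x ∈ Icc 0 1, g x ≤ ν * g x := fun x hx ↦ le_mul_of_one_le_left (hg.map_nonneg hx) hν
  obtain ⟨b, hb⟩ := exists_isUnimodal_of_lt_map (f := fun x ↦ ν * g x) (c := c)
    (continuousOn_const.mul hg.continuousOn)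
    (fun x hx y hy hxy ↦ mul_lt_mul_of_pos_left (hg.strictMonoOn hx hy hxy) hν0)
    (fun x hx y hy hxy ↦ mul_lt_mul_of_pos_left (hg.strictAntiOn hx hy hxy) hν0)
    (by simp only [hg.map_zero, mul_zero]) (by simp only [hg.map_one, mul_zero])
    ⟨hg.turning_pos, hg.turning_lt_one⟩ fun x hx ↦ (hg.lt_map_of_le_turning x hx).trans_le
      (hle x (hg.Icc_zero_turning_subset (Ioc_subset_Icc_self hx)))
  refine ⟨b, le_of_not_gt fun hba ↦ ?_, hb⟩
  have hgb : g b ≤ b := (hle b (hb.Icc_turning_one_subset hb.fixed_mem_right)).trans_eq hb.map_fixed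
  exact hgb.not_gt (hg.lt_map hb.fixed_pos hba)

end IsUnimodal

/-- In the monotone coordinate `k`, which matches turning points `c ↦ d` and fixed points `a ↦ b`
of unimodal maps `g` and `f`, the map `f` sends a point at least as far from the fixed point as `g`
does. To the right of the fixed point this is required only of images of the decreasing lap. -/
structure DominatesAlong (f g k : ℝ → ℝ) (c a d b : ℝ) : Prop where
  monotone : Monotone k
  mem_Icc : ∀ x, k x ∈ Icc 0 1
  map_turning : k c = d
  map_fixed : k a = b
  coord_lt_fixed : ∀ x < a, k x < b
  map_le : ∀ x ∈ Icc 0 1, g x ≤ a → f (k x) ≤ k (g x)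
  le_map : ∀ x ∈ Icc c 1, a ≤ g x → k (g x) ≤ f (k x)

namespace IsUnimodal

variable {g : ℝ → ℝ} {c a b l ν x : ℝ}

lemma stretch_leftTwin_le (hratio : TwinRatioAntitone g c) (hca : c < a) (hab : a ≤ b) (hb : b < 1)
    (hl : stretch c l a = b) : stretch c l (leftTwin g c a) ≤ leftTwin g c b := by
  have hle : (c - leftTwin g c b) / (b - c) ≤ (c - leftTwin g c a) / (a - c) :=
    hratio ⟨hca, hab.trans_lt hb⟩ ⟨hca.trans_le hab, hb⟩ hab
  have hbc : b - c = l * (a - c) := by rw [← hl, stretch, add_sub_cancel_left]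
  have hpos : 0 < a - c := sub_pos.2 hca
  rw [div_le_div_iff₀ (sub_pos.2 (hca.trans_le hab)) hpos, hbc, ← mul_assoc,
    mul_le_mul_iff_left₀ hpos] at hle
  rw [stretch]
  linarith

lemma map_stretch_le_of_mem_left (hg : IsUnimodal g c a) (hf : IsUnimodal (fun x ↦ ν * g x) c b)
    (hconc : ConcaveOn ℝ (Icc 0 1) g) (hν : 1 ≤ ν) (hl1 : 1 ≤ l) (hl : stretch c l a = b)
    (htwin : stretch c l (leftTwin g c a) ≤ leftTwin g c b) (hx : x ∈ Icc 0 c)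
    (hgx : g x ≤ a) (hpos : 0 ≤ stretch c l x) :
    ν * g (stretch c l x) ≤ stretch c l (g x) := by
  have hν0 : 0 < ν := one_pos.trans_le hν
  have hb := hf.Icc_turning_one_subset hf.fixed_mem_right
  obtain ⟨ha', hga'⟩ := hg.leftTwin_mem_and_map_leftTwin
    (hg.Icc_turning_one_subset hg.fixed_mem_right)
  rw [hg.map_fixed] at hga'
  have hxa' : x ≤ leftTwin g c a := (hg.strictMonoOn.le_iff_le hx ha').1 (hgx.trans_eq hga'.symm)
  have hstretch : stretch c l x ≤ stretch c l (leftTwin g c a) :=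
    (strictMono_stretch (one_pos.trans_le hl1)).monotone hxa'
  have hleft : ∀ {y}, y ∈ Icc 0 c → y ∈ Icc 0 1 := fun hy ↦ hg.Icc_zero_turning_subset hy
  have hha' : stretch c l (leftTwin g c a) ∈ Icc 0 c :=
    ⟨hpos.trans hstretch, (stretch_le_self hl1 ha'.2).trans ha'.2⟩
  have hmul : l * (g (leftTwin g c a) - g x) ≤
      g (stretch c l (leftTwin g c a)) - g (stretch c l x) :=
    mul_sub_le_map_stretch_sub hconc hl1 hxa' ha'.2 (hleft hx) (hleft ha')
      (hleft ⟨hpos, hstretch.trans hha'.2⟩) (hleft hha')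
  have hle : ν * g (stretch c l (leftTwin g c a)) ≤ b :=
    calc
      ν * g (stretch c l (leftTwin g c a)) ≤ ν * g (leftTwin g c b) :=
        mul_le_mul_of_nonneg_left
          (hg.strictMonoOn.monotoneOn hha' (hg.leftTwin_mem hb) htwin) hν0.le
      _ = b := by rw [hg.map_leftTwin hb, hf.map_fixed]
  rw [hga'] at hmul
  have hgap : l * (a - g x) ≤ ν * (l * (a - g x)) :=
    le_mul_of_one_le_left (mul_nonneg (one_pos.trans_le hl1).le (sub_nonneg.2 hgx)) hν
  linarith [mul_le_mul_of_nonneg_left hmul hν0.le, stretch_sub_stretch c l (g x) a]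

lemma map_stretch_le_of_fixed_le (hg : IsUnimodal g c a) (hf : IsUnimodal (fun x ↦ ν * g x) c b)
    (hconc : ConcaveOn ℝ (Icc 0 1) g) (hν : 1 ≤ ν) (hl1 : 1 ≤ l) (hl : stretch c l a = b)
    (hx : x ∈ Icc a 1) (hle : stretch c l x ≤ 1) :
    ν * g (stretch c l x) ≤ stretch c l (g x) := by
  have hbx : b ≤ stretch c l x := hl ▸ (strictMono_stretch (one_pos.trans_le hl1)).monotone hx.1
  have hmul : g (stretch c l x) - g (stretch c l a) ≤ l * (g x - g a) :=
    map_stretch_sub_le_mul_sub hconc hl1 hx.1 hg.turning_lt_fixed.le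
      ⟨hg.fixed_pos.le, hg.fixed_lt_one.le⟩ ⟨hg.fixed_pos.le.trans hx.1, hx.2⟩
      (hl ▸ ⟨hf.fixed_pos.le, hf.fixed_lt_one.le⟩) ⟨hf.fixed_pos.le.trans hbx, hle⟩
  have hgx : g x ≤ a := (hg.map_le_fixed_iff ⟨hg.turning_lt_fixed.le.trans hx.1, hx.2⟩).2 hx.1
  rw [hl, hg.map_fixed] at hmul
  have hgap : l * (a - g x) ≤ ν * (l * (a - g x)) :=
    le_mul_of_one_le_left (mul_nonneg (one_pos.trans_le hl1).le (sub_nonneg.2 hgx)) hν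
  linarith [mul_le_mul_of_nonneg_left hmul (one_pos.trans_le hν).le, hf.map_fixed,
    stretch_sub_stretch c l (g x) a]

lemma stretch_map_le (hg : IsUnimodal g c a) (hf : IsUnimodal (fun x ↦ ν * g x) c b)
    (hconc : ConcaveOn ℝ (Icc 0 1) g) (hν : 1 ≤ ν) (hl1 : 1 ≤ l) (hl : stretch c l a = b)
    (hx : x ∈ Icc c a) : stretch c l (g x) ≤ ν * g (stretch c l x) := by
  have hxb : stretch c l x ≤ b := hl ▸ (strictMono_stretch (one_pos.trans_le hl1)).monotone hx.2
  have hmul : g (stretch c l a) - g (stretch c l x) ≤ l * (g a - g x) :=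
    map_stretch_sub_le_mul_sub hconc hl1 hx.2 hx.1
      ⟨hg.turning_pos.le.trans hx.1, hx.2.trans hg.fixed_lt_one.le⟩
      ⟨hg.fixed_pos.le, hg.fixed_lt_one.le⟩
      ⟨hg.turning_pos.le.trans (hx.1.trans (self_le_stretch hl1 hx.1)),
        hxb.trans hf.fixed_lt_one.le⟩ (hl ▸ ⟨hf.fixed_pos.le, hf.fixed_lt_one.le⟩)
  have hgx : a ≤ g x := (hg.fixed_le_map_iff ⟨hx.1, hx.2.trans hg.fixed_lt_one.le⟩).2 hx.2
  rw [hl, hg.map_fixed] at hmul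
  have hgap : l * (g x - a) ≤ ν * (l * (g x - a)) :=
    le_mul_of_one_le_left (mul_nonneg (one_pos.trans_le hl1).le (sub_nonneg.2 hgx)) hν
  linarith [mul_le_mul_of_nonneg_left hmul (one_pos.trans_le hν).le, hf.map_fixed,
    stretch_sub_stretch c l (g x) a]

lemma map_clampStretch_le (hg : IsUnimodal g c a) (hf : IsUnimodal (fun x ↦ ν * g x) c b)
    (hconc : ConcaveOn ℝ (Icc 0 1) g) (hν : 1 ≤ ν) (hl1 : 1 ≤ l) (hl : stretch c l a = b)
    (htwin : stretch c l (leftTwin g c a) ≤ leftTwin g c b) (hx : x ∈ Icc 0 1) (hgx : g x ≤ a) :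
    ν * g (clampStretch c l x) ≤ clampStretch c l (g x) := by
  have hle : stretch c l (g x) ≤ 1 :=
    ((strictMono_stretch (one_pos.trans_le hl1)).monotone hgx).trans
      (hl.trans_le hf.fixed_lt_one.le)
  have hclamp : stretch c l (g x) ≤ clampStretch c l (g x) := le_max_of_le_right (le_min hle le_rfl)
  rcases le_total x c with hxc | hcx
  · rcases le_total (stretch c l x) 0 with hneg | hpos
    · rw [clampStretch, max_eq_left ((min_le_right _ _).trans hneg), hf.map_zero]
      exact le_max_left _ _
    · rw [clampStretch, min_eq_right ((stretch_le_self hl1 hxc).trans hx.2), max_eq_right hpos]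
      exact (hg.map_stretch_le_of_mem_left hf hconc hν hl1 hl htwin ⟨hx.1, hxc⟩ hgx hpos).trans
        hclamp
  · have hax : a ≤ x := (hg.map_le_fixed_iff ⟨hcx, hx.2⟩).1 hgx
    rcases le_total (stretch c l x) 1 with hx1 | hx1
    · rw [clampStretch, min_eq_right hx1, max_eq_right (hx.1.trans (self_le_stretch hl1 hcx))]
      exact (hg.map_stretch_le_of_fixed_le hf hconc hν hl1 hl ⟨hax, hx.2⟩ hx1).trans hclamp
    · rw [clampStretch, min_eq_left hx1, max_eq_right zero_le_one, hf.map_one]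
      exact le_max_left _ _

lemma clampStretch_map_le (hg : IsUnimodal g c a) (hf : IsUnimodal (fun x ↦ ν * g x) c b)
    (hconc : ConcaveOn ℝ (Icc 0 1) g) (hν : 1 ≤ ν) (hl1 : 1 ≤ l) (hl : stretch c l a = b)
    (hx : x ∈ Icc c 1) (hgx : a ≤ g x) : clampStretch c l (g x) ≤ ν * g (clampStretch c l x) := by
  have hmono := (strictMono_stretch (c := c) (one_pos.trans_le hl1)).monotone
  have hxa : x ≤ a := (hg.fixed_le_map_iff hx).1 hgx
  have hle : stretch c l x ≤ 1 := (hmono hxa).trans (hl.trans_le hf.fixed_lt_one.le)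
  have hpos : 0 ≤ stretch c l x := hg.turning_pos.le.trans (hx.1.trans (self_le_stretch hl1 hx.1))
  rw [clampStretch, clampStretch, min_eq_right hle, max_eq_right hpos]
  refine (max_le ?_ (min_le_right _ _)).trans (hg.stretch_map_le hf hconc hν hl1 hl ⟨hx.1, hxa⟩)
  exact hf.fixed_pos.le.trans (hl.symm.trans_le (hmono hgx))

lemma dominatesAlong_clampStretch (hg : IsUnimodal g c a) (hf : IsUnimodal (fun x ↦ ν * g x) c b)
    (hconc : ConcaveOn ℝ (Icc 0 1) g) (hν : 1 ≤ ν) (hl1 : 1 ≤ l) (hl : stretch c l a = b)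
    (htwin : stretch c l (leftTwin g c a) ≤ leftTwin g c b) :
    DominatesAlong (fun x ↦ ν * g x) g (clampStretch c l) c a c b where
  monotone _ _ hxy := max_le_max_left _ <| min_le_min_left _ <|
    (strictMono_stretch (one_pos.trans_le hl1)).monotone hxy
  mem_Icc _ := ⟨le_max_left _ _, max_le zero_le_one (min_le_left _ _)⟩
  map_turning := by
    rw [clampStretch, stretch_self, min_eq_right hg.turning_lt_one.le,
      max_eq_right hg.turning_pos.le]
  map_fixed := by
    rw [clampStretch, hl, min_eq_right hf.fixed_lt_one.le, max_eq_right hf.fixed_pos.le]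
  coord_lt_fixed _ hx :=
    max_lt hf.fixed_pos (min_lt_of_right_lt (hl ▸ strictMono_stretch (one_pos.trans_le hl1) hx))
  map_le _ hx hgx := hg.map_clampStretch_le hf hconc hν hl1 hl htwin hx hgx
  le_map _ hx hgx := hg.clampStretch_map_le hf hconc hν hl1 hl hx hgx

lemma exists_dominatesAlong_const_mul (hg : IsUnimodal g c a)
    (hf : IsUnimodal (fun x ↦ ν * g x) c b) (hconc : ConcaveOn ℝ (Icc 0 1) g)
    (hratio : TwinRatioAntitone g c) (hν : 1 ≤ ν) (hab : a ≤ b) :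
    ∃ k, DominatesAlong (fun x ↦ ν * g x) g k c a c b := by
  have hpos : 0 < a - c := sub_pos.2 hg.turning_lt_fixed
  have hl : stretch c ((b - c) / (a - c)) a = b := by
    rw [stretch, div_mul_cancel₀ _ hpos.ne', add_sub_cancel]
  exact ⟨_, hg.dominatesAlong_clampStretch hf hconc hν
    ((one_le_div hpos).2 (sub_le_sub_right hab c)) hl
    (stretch_leftTwin_le hratio hg.turning_lt_fixed hab hf.fixed_lt_one hl)⟩

end IsUnimodal

/-- The interval followed by `f` in place of the point `x` of an orbit of `g`: it lies on the same
side of the fixed point `b` as `x` does of `a`, and on one lap of `f`. -/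
noncomputable def trackingInterval (g k : ℝ → ℝ) (a d b x : ℝ) : Set ℝ :=
  if x < a then if g x < a then Icc (k x) d else Icc (max d (k x)) b else Icc b (k x)

section Tracking

variable {f g k : ℝ → ℝ} {a b c d x t : ℝ}

lemma trackingInterval_of_lt_of_map_lt (hx : x < a) (hgx : g x < a) :
    trackingInterval g k a d b x = Icc (k x) d := by
  rw [trackingInterval, if_pos hx, if_pos hgx]

lemma trackingInterval_of_lt_of_le_map (hx : x < a) (hgx : a ≤ g x) :
    trackingInterval g k a d b x = Icc (max d (k x)) b := by
  rw [trackingInterval, if_pos hx, if_neg hgx.not_gt]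

lemma trackingInterval_of_ge (hx : a ≤ x) : trackingInterval g k a d b x = Icc b (k x) :=
  if_neg hx.not_gt

namespace DominatesAlong

lemma fixed_le_coord (hk : DominatesAlong f g k c a d b) (hx : a ≤ x) : b ≤ k x :=
  hk.map_fixed.symm.trans_le (hk.monotone hx)

lemma max_turning_lt (hk : DominatesAlong f g k c a d b) (hf : IsUnimodal f d b) (hx : x < a) :
    max d (k x) < b :=
  max_lt hf.turning_lt_fixed (hk.coord_lt_fixed x hx)

lemma le_map_max_turning (hk : DominatesAlong f g k c a d b) (hg : IsUnimodal g c a)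
    (hx : x ∈ Icc 0 1) (hgx : a ≤ g x) : k (g x) ≤ f (max d (k x)) := by
  rcases le_total x c with hxc | hcx
  · have hgxc : g x ≤ g c := hg.map_le_map_turning hx
    rw [max_eq_left ((hk.monotone hxc).trans_eq hk.map_turning), ← hk.map_turning]
    exact (hk.monotone hgxc).trans (hk.le_map c hg.turning_mem_right (hgx.trans hgxc))
  · rw [max_eq_right (hk.map_turning.symm.trans_le (hk.monotone hcx))]
    exact hk.le_map x ⟨hcx, hx.2⟩ hgx

lemma coord_le_turning (hk : DominatesAlong f g k c a d b) (hg : IsUnimodal g c a) (hx : x < a)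
    (hgx : g x < a) : k x ≤ d :=
  (hk.monotone (hg.lt_turning_of_map_lt_fixed hx hgx).le).trans_eq hk.map_turning

lemma exists_trackingInterval_eq_Icc (hk : DominatesAlong f g k c a d b) (hg : IsUnimodal g c a)
    (hf : IsUnimodal f d b) (x : ℝ) : ∃ u v, u ≤ v ∧ trackingInterval g k a d b x = Icc u v := by
  rcases lt_or_ge x a with hx | hx
  · rcases lt_or_ge (g x) a with hgx | hgx
    · exact ⟨_, _, hk.coord_le_turning hg hx hgx, trackingInterval_of_lt_of_map_lt hx hgx⟩
    · exact ⟨_, _, (hk.max_turning_lt hf hx).le, trackingInterval_of_lt_of_le_map hx hgx⟩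
  · exact ⟨_, _, hk.fixed_le_coord hx, trackingInterval_of_ge hx⟩

lemma trackingInterval_subset_lap (hk : DominatesAlong f g k c a d b) (hf : IsUnimodal f d b)
    (x : ℝ) :
    trackingInterval g k a d b x ⊆ Icc 0 d ∨ trackingInterval g k a d b x ⊆ Icc d 1 := by
  rcases lt_or_ge x a with hx | hx
  · rcases lt_or_ge (g x) a with hgx | hgx
    · rw [trackingInterval_of_lt_of_map_lt hx hgx]
      exact .inl (Icc_subset_Icc_left (hk.mem_Icc x).1)
    · rw [trackingInterval_of_lt_of_le_map hx hgx]
      exact .inr (Icc_subset_Icc (le_max_left _ _) hf.fixed_lt_one.le)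
  · rw [trackingInterval_of_ge hx]
    exact .inr (Icc_subset_Icc hf.turning_lt_fixed.le (hk.mem_Icc x).2)

lemma trackingInterval_subset_Icc (hk : DominatesAlong f g k c a d b) (hf : IsUnimodal f d b)
    (x : ℝ) : trackingInterval g k a d b x ⊆ Icc 0 1 :=
  (hk.trackingInterval_subset_lap hf x).elim (·.trans hf.Icc_zero_turning_subset)
    (·.trans hf.Icc_turning_one_subset)

lemma injOn_trackingInterval (hk : DominatesAlong f g k c a d b) (hf : IsUnimodal f d b) (x : ℝ) :
    InjOn f (trackingInterval g k a d b x) :=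
  (hk.trackingInterval_subset_lap hf x).elim hf.strictMonoOn.injOn.mono hf.strictAntiOn.injOn.mono

lemma trackingInterval_subset_of_le (hk : DominatesAlong f g k c a d b) (hf : IsUnimodal f d b)
    (hx : x ≤ a) : trackingInterval g k a d b x ⊆ Icc (k x) b := by
  rcases hx.lt_or_eq with hx | rfl
  · rcases lt_or_ge (g x) a with hgx | hgx
    · rw [trackingInterval_of_lt_of_map_lt hx hgx]
      exact Icc_subset_Icc_right hf.turning_lt_fixed.le
    · rw [trackingInterval_of_lt_of_le_map hx hgx]
      exact Icc_subset_Icc_left (le_max_right _ _)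
  · rw [trackingInterval_of_ge le_rfl, hk.map_fixed]

lemma trackingInterval_map_subset_image (hk : DominatesAlong f g k c a d b)
    (hg : IsUnimodal g c a) (hf : IsUnimodal f d b) (hx : x ∈ Icc 0 1) :
    trackingInterval g k a d b (g x) ⊆ f '' trackingInterval g k a d b x := by
  have hcont : ContinuousOn f (trackingInterval g k a d b x) :=
    hf.continuousOn.mono (hk.trackingInterval_subset_Icc hf x)
  rcases lt_or_ge x a with hxa | hxa
  · rcases lt_or_ge (g x) a with hgx | hgx
    · have hb : b ≤ f d := hf.map_fixed.symm.trans_le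
        (hf.map_le_map_turning (hf.Icc_turning_one_subset hf.fixed_mem_right))
      rw [trackingInterval_of_lt_of_map_lt hxa hgx] at hcont ⊢
      exact (hk.trackingInterval_subset_of_le hf hgx.le).trans <|
        (Icc_subset_Icc (hk.map_le x hx hgx.le) hb).trans <|
          intermediate_value_Icc (hk.coord_le_turning hg hxa hgx) hcont
    · rw [trackingInterval_of_lt_of_le_map hxa hgx] at hcont ⊢
      rw [trackingInterval_of_ge hgx]
      exact (Icc_subset_Icc hf.map_fixed.le (hk.le_map_max_turning hg hx hgx)).trans <|
        intermediate_value_Icc' (hk.max_turning_lt hf hxa).le hcont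
  · have hgx : g x ≤ a :=
      (hg.map_le_fixed_iff ⟨hg.turning_lt_fixed.le.trans hxa, hx.2⟩).2 hxa
    rw [trackingInterval_of_ge hxa] at hcont ⊢
    exact (hk.trackingInterval_subset_of_le hf hgx).trans <|
      (Icc_subset_Icc (hk.map_le x hx hgx) hf.map_fixed.ge).trans <|
        intermediate_value_Icc' (hk.fixed_le_coord hxa) hcont

end DominatesAlong

end Tracking

namespace IsUnimodal

variable {f g : ℝ → ℝ} {a b c d y w : ℝ} {q : ℕ}

lemma lt_map_iff_of_isCycleIn (hf : IsUnimodal f c a) (hy : IsCycleIn f (Icc 0 1) q y) :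
    y < f y ↔ y < a := by
  refine ⟨fun hlt ↦ ?_, fun hya ↦
    hf.lt_map (hy.mem.1.lt_of_ne' (hy.ne_of_map_eq hf.map_zero)) hya⟩
  by_contra! hay
  exact (hlt.trans_le ((hf.map_le_fixed_iff ⟨hf.turning_lt_fixed.le.trans hay, hy.mem.2⟩).2
    hay)).not_ge hay

lemma map_lt_of_isCycleIn (hf : IsUnimodal f c a) (hy : IsCycleIn f (Icc 0 1) q y) (hay : a ≤ y) :
    f y < a := by
  have hlt : a < y := hay.lt_of_ne' (hy.ne_of_map_eq hf.map_fixed)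
  exact (hf.map_lt_fixed_iff ⟨(hf.turning_lt_fixed.trans hlt).le, hy.mem.2⟩).2 hlt

lemma exists_fixed_le_iterate (hf : IsUnimodal f c a) (hy : IsCycleIn f (Icc 0 1) q y) :
    ∃ i, a ≤ f^[i] y := by
  obtain ⟨i, hi⟩ := exists_map_iterate_le_of_isPeriodicPt hy.period_pos hy.isPeriodicPt
  exact ⟨i, le_of_not_gt fun hlt ↦ hi.not_gt ((hf.lt_map_iff_of_isCycleIn (hy.iterate i)).2 hlt)⟩

lemma chi_eq_ite_of_isCycleIn (hf : IsUnimodal f c a) (hy : IsCycleIn f (Icc 0 1) q y) :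
    chi f y = if y < a ↔ f y < a then 0 else 1 / 2 := by
  have hmul : 0 < (f y - y) * (f (f y) - f y) ↔ (y < a ↔ f y < a) := by
    rw [← hf.lt_map_iff_of_isCycleIn hy, ← hf.lt_map_iff_of_isCycleIn hy.map, mul_pos_iff, sub_pos,
      sub_pos, sub_neg, sub_neg]
    have hne := hy.map_ne
    have hne' := hy.map.map_ne
    grind
  rw [chi, ← ite_not]
  exact if_congr (not_le.trans hmul) rfl rfl

lemma overRotNum_eq_of_lt_iff_lt (hf : IsUnimodal f d b) (hg : IsUnimodal g c a)
    (hw : IsCycleIn f (Icc 0 1) q w) (hy : IsCycleIn g (Icc 0 1) q y)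
    (hside : ∀ i, f^[i] w < b ↔ g^[i] y < a) : overRotNum f w = overRotNum g y := by
  rw [overRotNum_eq_birkhoffSum_div hw.period_pos hw.isPeriodicPt,
    overRotNum_eq_birkhoffSum_div hy.period_pos hy.isPeriodicPt, birkhoffSum, birkhoffSum]
  congr 1
  refine Finset.sum_congr rfl fun i _ ↦ ?_
  rw [hf.chi_eq_ite_of_isCycleIn (hw.iterate i), hg.chi_eq_ite_of_isCycleIn (hy.iterate i),
    ← iterate_succ_apply' f, ← iterate_succ_apply' g]
  exact if_congr (iff_congr (hside i) (hside (i + 1))) rfl rfl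

lemma overRotNum_eq_half_of_alternating (hg : IsUnimodal g c a) (hy : IsCycleIn g (Icc 0 1) q y)
    (halt : ∀ i, g^[i] y < a → a ≤ g^[i + 1] y) : overRotNum g y = 1 / 2 := by
  refine overRotNum_eq_half hy.period_pos hy.isPeriodicPt fun i ↦ ?_
  rw [hg.chi_eq_ite_of_isCycleIn (hy.iterate i), if_neg]
  intro hiff
  rcases lt_or_ge (g^[i] y) a with hlt | hge
  · have hle := halt i hlt
    rw [iterate_succ_apply'] at hle
    exact hle.not_gt (hiff.1 hlt)
  · exact hge.not_gt (hiff.2 (hg.map_lt_of_isCycleIn (hy.iterate i) hge))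

/-- Every second point of an alternating cycle lies to the left of the fixed point, and along these
the map cannot increase forever. -/
lemma exists_map_map_le_of_alternating (hg : IsUnimodal g c a) (hy : IsCycleIn g (Icc 0 1) q y)
    (halt : ∀ i, g^[i] y < a → a ≤ g^[i + 1] y) :
    ∃ z ∈ Icc 0 1, z < a ∧ a ≤ g z ∧ g z ∈ Icc 0 1 ∧ g (g z) ≤ z := by
  obtain ⟨m, hm⟩ : ∃ m, g^[m] y < a := by
    rcases lt_or_ge y a with hya | hay
    · exact ⟨0, hya⟩
    · exact ⟨1, hg.map_lt_of_isCycleIn hy hay⟩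
  have hleft : ∀ j, g^[m + 2 * j] y < a := fun j ↦ by
    induction j with
    | zero => exact hm
    | succ j ih =>
      have hlt := hg.map_lt_of_isCycleIn (hy.iterate _) (halt _ ih)
      rwa [← iterate_succ_apply' g] at hlt
  obtain ⟨j, hj⟩ := exists_map_iterate_le_of_isPeriodicPt hy.period_pos
    ((hy.isPeriodicPt.apply_iterate m).iterate 2)
  have hz_eq : (g^[2])^[j] (g^[m] y) = g^[m + 2 * j] y := by
    rw [← iterate_mul, ← iterate_add_apply, add_comm]
  rw [hz_eq] at hj
  have hz := hy.iterate (m + 2 * j)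
  refine ⟨_, hz.mem, hleft j, ?_, hz.map_mem, hj⟩
  rw [← iterate_succ_apply' g]
  exact halt _ (hleft j)

end IsUnimodal

namespace DominatesAlong

variable {f g k : ℝ → ℝ} {a b c d y : ℝ} {q : ℕ}

lemma exists_isCycleIn_of_map_lt (hk : DominatesAlong f g k c a d b) (hg : IsUnimodal g c a)
    (hf : IsUnimodal f d b) (hy : IsCycleIn g (Icc 0 1) q y)
    (hleft : ∃ i, g^[i] y < a ∧ g^[i + 1] y < a) :
    ∃ w, IsCycleIn f (Icc 0 1) q w ∧ ∀ i, f^[i] w < b ↔ g^[i] y < a := by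
  obtain ⟨w, hwq, hmem⟩ := exists_isPeriodicPt_of_covering (f := f)
    (J := fun i ↦ trackingInterval g k a d b (g^[i] y)) hy.period_pos
    (fun i ↦ by simp only [iterate_add_apply, hy.isPeriodicPt.eq])
    (fun i ↦ hk.exists_trackingInterval_eq_Icc hg hf _)
    (fun i ↦ hf.continuousOn.mono (hk.trackingInterval_subset_Icc hf _))
    (fun i ↦ hk.injOn_trackingInterval hf _) fun i ↦ by
      rw [iterate_succ_apply']
      exact hk.trackingInterval_map_subset_image hg hf (hy.iterate_mem i)
  have hle : ∀ i, g^[i] y < a → f^[i] w ≤ b := fun i hi ↦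
    (hk.trackingInterval_subset_of_le hf hi.le (hmem i)).2
  have hge : ∀ i, a ≤ g^[i] y → b ≤ f^[i] w := fun i hi ↦ by
    have hi' := hmem i
    rw [trackingInterval_of_ge hi] at hi'
    exact hi'.1
  have hne : f w ≠ w := fun hfix ↦ by
    obtain ⟨i, hi, hi'⟩ := hleft
    obtain ⟨j, hj⟩ := hg.exists_fixed_le_iterate hy
    rw [iterate_succ_apply'] at hi'
    have hwi := hmem i
    have hwj := hge j hj
    rw [trackingInterval_of_lt_of_map_lt hi hi', iterate_fixed hfix] at hwi
    rw [iterate_fixed hfix] at hwj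
    exact hf.turning_lt_fixed.not_ge (hwj.trans hwi.2)
  have hw : IsCycleIn f (Icc 0 1) q w :=
    ⟨hy.period_pos, hwq, fun i ↦ hk.trackingInterval_subset_Icc hf _ (hmem i), hne⟩
  refine ⟨w, hw, fun i ↦ ⟨fun hlt ↦ ?_, fun hlt ↦ ?_⟩⟩
  · exact lt_of_not_ge fun hay ↦ hlt.not_ge (hge i hay)
  · exact (hle i hlt).lt_of_ne ((hw.iterate i).ne_of_map_eq hf.map_fixed)

lemma exists_isPeriodicPt_two_of_alternating (hk : DominatesAlong f g k c a d b)
    (hg : IsUnimodal g c a) (hf : IsUnimodal f d b) (hy : IsCycleIn g (Icc 0 1) q y)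
    (halt : ∀ i, g^[i] y < a → a ≤ g^[i + 1] y) :
    ∃ w ∈ Icc 0 1, IsPeriodicPt f 2 w ∧ f w ≠ w := by
  obtain ⟨z, hz, hza, hgz, hgz01, hggz⟩ := hg.exists_map_map_le_of_alternating hy halt
  have hgg : g (g z) ≤ a := hggz.trans hza.le
  exact hf.exists_isPeriodicPt_two (u := max d (k z)) (v := k (g z))
    ⟨le_max_left _ _, hk.max_turning_lt hf hza⟩ ⟨hk.fixed_le_coord hgz, (hk.mem_Icc _).2⟩
    (hk.le_map_max_turning hg hz hgz)
    ((hk.map_le _ hgz01 hgg).trans <| (hk.monotone hggz).trans (le_max_right _ _))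

lemma overRotInterval_subset (hk : DominatesAlong f g k c a d b) (hg : IsUnimodal g c a)
    (hf : IsUnimodal f d b) (hmaps : MapsTo g (Icc 0 1) (Icc 0 1)) :
    overRotInterval g (Icc 0 1) ⊆ overRotInterval f (Icc 0 1) := by
  refine closure_mono ?_
  rintro r ⟨y, hy, ⟨q, hq, hyq⟩, hne, rfl⟩
  have hcycle : IsCycleIn g (Icc 0 1) q y := ⟨hq, hyq, fun i ↦ hmaps.iterate i hy, hne⟩
  by_cases hleft : ∃ i, g^[i] y < a ∧ g^[i + 1] y < a
  · obtain ⟨w, hw, hside⟩ := hk.exists_isCycleIn_of_map_lt hg hf hcycle hleft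
    exact ⟨w, hw.mem, hw.mem_periodicPts, hw.map_ne,
      hf.overRotNum_eq_of_lt_iff_lt hg hw hcycle hside⟩
  · push Not at hleft
    obtain ⟨w, hw, hper, hne⟩ := hk.exists_isPeriodicPt_two_of_alternating hg hf hcycle hleft
    refine ⟨w, hw, mk_mem_periodicPts two_pos hper, hne, ?_⟩
    rw [overRotNum_eq_half_of_isPeriodicPt_two hper,
      hg.overRotNum_eq_half_of_alternating hcycle hleft]

end DominatesAlong

namespace SClass

variable {g : ℝ → ℝ} {c : ℝ}

lemma continuousOn (hg : SClass g c) : ContinuousOn g (Icc 0 1) := by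
  rw [← Icc_union_Icc_eq_Icc hg.hc.1.le hg.hc.2.le]
  exact hg.smoothL.continuousOn.union_of_isClosed hg.smoothR.continuousOn isClosed_Icc isClosed_Icc

lemma lt_map_of_le_turning (hg : SClass g c) {x : ℝ} (hx : x ∈ Ioc 0 c) : x < g x := by
  have h0 : (0 : ℝ) ∈ Icc 0 1 := left_mem_Icc.2 zero_le_one
  have hx' : x ∈ Icc 0 1 := ⟨hx.1.le, hx.2.trans hg.hc.2.le⟩
  have hslope : slope g 0 c ≤ slope g 0 x :=
    slope_le_slope_of_concaveOn hg.concave h0 hx' h0 (Ioo_subset_Icc_self hg.hc) hx.1 hg.hc.1 le_rfl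
      hx.2
  rw [slope_def_field, slope_def_field, hg.f0, sub_zero, sub_zero, sub_zero, sub_zero] at hslope
  exact (one_lt_div hx.1).1 (((one_lt_div hg.hc.1).2 hg.fcgt).trans_le hslope)

lemma exists_isUnimodal (hg : SClass g c) : ∃ a, IsUnimodal g c a :=
  exists_isUnimodal_of_lt_map hg.continuousOn hg.mono hg.anti hg.f0 hg.f1 hg.hc
    fun _ hx ↦ hg.lt_map_of_le_turning hx

lemma twinRatioAntitone (hg : SClass g c)
    (hcond : ∀ x ∈ Ioc c 1, ∀ x' ∈ Icc 0 c, g x' = g x →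
      |derivWithin g (Icc c 1) x * (x - c)| ≤ |derivWithin g (Icc 0 c) x' * (x' - c)|) :
    TwinRatioAntitone g c := by
  obtain ⟨a, ha⟩ := hg.exists_isUnimodal
  have hleft : ∀ x ∈ Ioo 0 c, Icc 0 c ∈ 𝓝 x := fun x hx ↦ Icc_mem_nhds hx.1 hx.2
  have hright : ∀ x ∈ Ioo c 1, Icc c 1 ∈ 𝓝 x := fun x hx ↦ Icc_mem_nhds hx.1 hx.2
  refine ha.twinRatioAntitone hg.concave
    (fun x hx ↦ (hg.smoothL.contDiffAt (hleft x hx)).differentiableAt one_ne_zero)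
    (fun x hx ↦ (hg.smoothR.contDiffAt (hright x hx)).differentiableAt one_ne_zero) fun x hx ↦ ?_
  obtain ⟨htwin, hmap⟩ := ha.leftTwin_mem_and_map_leftTwin
    (ha.Icc_turning_one_subset (Ioo_subset_Icc_self hx))
  rw [← derivWithin_of_mem_nhds (hright x hx),
    ← derivWithin_of_mem_nhds (hleft _ (ha.leftTwin_mem_Ioo hx))]
  exact hcond x (Ioo_subset_Ioc_self hx) _ htwin hmap

end SClass

theorem stmt10_general {g : ℝ → ℝ} {c a ν : ℝ} (hg : IsUnimodal g c a)
    (hconc : ConcaveOn ℝ (Icc 0 1) g) (hmaps : MapsTo g (Icc 0 1) (Icc 0 1))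
    (hratio : TwinRatioAntitone g c) (hν : 1 ≤ ν) :
    overRotInterval g (Icc 0 1) ⊆ overRotInterval (fun x ↦ ν * g x) (Icc 0 1) := by
  obtain ⟨b, hab, hf⟩ := hg.exists_const_mul hν
  obtain ⟨k, hk⟩ := hg.exists_dominatesAlong_const_mul hf hconc hratio hν hab
  exact hk.overRotInterval_subset hg hf hmaps

theorem stmt10 (g : ℝ → ℝ) (c : ℝ) (hg : SClass g c)
    -- |g'(x)·(x−c_g)| ≤ |g'(x'_g)·(x'_g−c_g)| for every x ∈ (c_g,1]
    (hcond : ∀ x ∈ Set.Ioc c 1, ∀ x' ∈ Set.Icc (0:ℝ) c, g x' = g x →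
      |derivWithin g (Set.Icc c 1) x * (x - c)| ≤ |derivWithin g (Set.Icc 0 c) x' * (x' - c)|)
    (ν : ℝ) (hν : 1 < ν)
    (hmaps : Set.MapsTo (fun x => ν * g x) (Set.Icc 0 1) (Set.Icc 0 1)) :
    overRotInterval g (Set.Icc 0 1) ⊆ overRotInterval (fun x => ν * g x) (Set.Icc 0 1) := by
  obtain ⟨a, ha⟩ := hg.exists_isUnimodal
  exact stmt10_general ha hg.concave hg.maps (hg.twinRatioAntitone hcond) hν.le
end

section
/- Let f,g∈ℋ with f(x)≥g(x) for all x∈[0,1] and f≠g, and suppose g has a fixed point a_g∈[c_g,1]. Then f has a unique fixed point a_f in [c_f,1]; moreover a_f>a_g, a_g/a'_g < a_f/a'_f, and f'(a_f)≤g'(a_g). -/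
open Set Polynomial

/-- The class ℋ: nonzero real polynomials of degree at most 3 with `f(0)=f(1)=0`,
nonnegative on `[0,1]`, and with exactly one critical point `c` in `[0,1]`. -/
structure HClass (f : Polynomial ℝ) (c : ℝ) : Prop where
  deg : f.degree ≤ 3
  ne0 : f ≠ 0
  f0 : f.eval 0 = 0
  f1 : f.eval 1 = 0
  nonneg : ∀ x ∈ Set.Icc (0:ℝ) 1, 0 ≤ f.eval x
  hc : c ∈ Set.Icc (0:ℝ) 1
  crit : f.derivative.eval c = 0
  uniq : ∀ y ∈ Set.Icc (0:ℝ) 1, f.derivative.eval y = 0 → y = c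

/-!
If `f` is a cubic vanishing at `0` and `1` and `f a = a` with `a ≠ 0, 1`, then
`f' a = 3 - 1 / (1 - a) - f' 0 * (1 - a)`. Hence increasing both the fixed point and the slope
at `0` lowers the slope at the fixed point. The graph of `f` lies above the diagonal at `a_g`, so
`f` has a fixed point `a_f > a_g`, and `f' a_f < g' a_g ≤ 0` places `a_f` to the right of `c_f`.

For the ratios, rescale the fixed points to `1`: the polynomial
`f (a_f * s) / a_f - g (a_g * s) / a_g` is again a cubic in `s` vanishing at `0` and `1`, with
nonnegative slope at `0` and negative slope at `1`, hence positive in between. At `s = a'_g / a_g`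
this says that `f (a_f * s) > a_f`, that is, `a'_f < a_f * s`.
-/

/-- Polynomials of degree at most `3` that vanish at both endpoints of the unit interval.
Unlike `HClass` this is a linear condition, so it applies to differences as well. -/
structure IsEndpointCubic {R : Type*} [CommRing R] (p : R[X]) : Prop where
  degree_le : p.degree ≤ 3
  eval_zero : p.eval 0 = 0
  eval_one : p.eval 1 = 0

namespace IsEndpointCubic

section CommRing

variable {R : Type*} [CommRing R] {p q : R[X]}

theorem sub (hp : IsEndpointCubic p) (hq : IsEndpointCubic q) : IsEndpointCubic (p - q) where
  degree_le := (degree_sub_le_of_le hp.degree_le hq.degree_le).trans_eq (max_self 3)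
  eval_zero := by rw [eval_sub, hp.eval_zero, hq.eval_zero, sub_zero]
  eval_one := by rw [eval_sub, hp.eval_one, hq.eval_one, sub_zero]

theorem eq_hermite_interpolation (hp : IsEndpointCubic p) :
    p = X * (1 - X) *
      (C (p.derivative.eval 0) * (1 - X) - C (p.derivative.eval 1) * X) := by
  obtain ⟨a, b, c, d, rfl⟩ : ∃ a b c d, p = C a + C b * X + C c * X ^ 2 + C d * X ^ 3 :=
    ⟨_, _, _, _, by
      simpa [Finset.sum_range_succ] using p.as_sum_range_C_mul_X_pow'
        (Nat.lt_succ_of_le (natDegree_le_of_degree_le hp.degree_le))⟩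
  have h0 : a = 0 := by simpa using hp.eval_zero
  have h1 : d = -b - c := by
    have : a + b + c + d = 0 := by simpa using hp.eval_one
    linear_combination this - h0
  subst h0 h1
  have hslope0 : (C 0 + C b * X + C c * X ^ 2 + C (-b - c) * X ^ 3).derivative.eval 0 = b := by
    simp
  have hslope1 : (C 0 + C b * X + C c * X ^ 2 + C (-b - c) * X ^ 3).derivative.eval 1 =
      b + c * 2 + (-b - c) * 3 := by
    simp [one_add_one_eq_two, two_add_one_eq_three]
  rw [hslope0, hslope1]
  simp only [map_zero, map_add, map_sub, map_mul, map_neg, map_ofNat]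
  ring

theorem eval_eq (hp : IsEndpointCubic p) (x : R) :
    p.eval x = x * (1 - x) * (p.derivative.eval 0 * (1 - x) - p.derivative.eval 1 * x) := by
  simpa using congrArg (eval x) hp.eq_hermite_interpolation

theorem derivative_eval_eq (hp : IsEndpointCubic p) (x : R) :
    p.derivative.eval x =
      p.derivative.eval 0 * ((1 - x) * (1 - 3 * x)) - p.derivative.eval 1 * (x * (2 - 3 * x)) := by
  have h := congrArg (fun q => q.derivative.eval x) hp.eq_hermite_interpolation
  simp only [derivative_mul, derivative_X, one_mul, derivative_sub, derivative_one, zero_sub,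
    mul_neg, mul_one, derivative_C, zero_mul, zero_add, eval_add, eval_mul, eval_sub,
    Polynomial.eval_one, eval_X, eval_neg, eval_C] at h
  linear_combination h

end CommRing

section OrderedRing

variable {R : Type*} [CommRing R] [LinearOrder R] [IsStrictOrderedRing R] {p : R[X]}

theorem eval_pos (hp : IsEndpointCubic p) (hne : p ≠ 0) (h0 : 0 ≤ p.derivative.eval 0)
    (h1 : p.derivative.eval 1 ≤ 0) {x : R} (hx : x ∈ Ioo 0 1) : 0 < p.eval x := by
  have hx' : 0 < 1 - x := sub_pos.2 hx.2
  have hne' : p.derivative.eval 0 ≠ 0 ∨ p.derivative.eval 1 ≠ 0 := by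
    by_contra! h
    exact hne (by rw [hp.eq_hermite_interpolation, h.1, h.2]; simp)
  rw [hp.eval_eq]
  refine mul_pos (mul_pos hx.1 hx') ?_
  rcases hne' with h | h
  · linarith [mul_pos (h0.lt_of_ne' h) hx', mul_nonpos_of_nonpos_of_nonneg h1 hx.1.le]
  · linarith [mul_nonneg h0 hx'.le, mul_neg_of_neg_of_pos (h1.lt_of_ne h) hx.1]

end OrderedRing

section Field

variable {K : Type*} [Field K] {f g : K[X]} {a b : K}

theorem interpolation_eq_one_of_fixedPt (hf : IsEndpointCubic f) (ha : a ≠ 0)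
    (hfa : f.eval a = a) :
    (1 - a) * (f.derivative.eval 0 * (1 - a) - f.derivative.eval 1 * a) = 1 :=
  mul_left_cancel₀ ha (by linear_combination hfa - hf.eval_eq a)

theorem derivative_eval_of_fixedPt (hf : IsEndpointCubic f) (ha : a ≠ 0) (ha1 : 1 - a ≠ 0)
    (hfa : f.eval a = a) :
    f.derivative.eval a = 3 - 1 / (1 - a) - f.derivative.eval 0 * (1 - a) := by
  rw [hf.derivative_eval_eq]
  field_simp
  linear_combination (2 - 3 * a) * hf.interpolation_eq_one_of_fixedPt ha hfa

variable [LinearOrder K] [IsStrictOrderedRing K]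

theorem derivative_zero_lt_of_fixedPt (hf : IsEndpointCubic f) (ha : a ∈ Ioo 0 1)
    (hfa : f.eval a = a) (h1 : f.derivative.eval 1 < 0) :
    f.derivative.eval 0 < 1 / (1 - a) ^ 2 := by
  have ha1 : 0 < 1 - a := sub_pos.2 ha.2
  have hfix := hf.interpolation_eq_one_of_fixedPt ha.1.ne' hfa
  rw [lt_div_iff₀ (pow_pos ha1 2)]
  linarith [mul_pos ha1 (mul_pos (neg_pos.2 h1) ha.1)]

theorem derivative_lt_of_fixedPt_lt (hf : IsEndpointCubic f) (hg : IsEndpointCubic g)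
    (h0 : g.derivative.eval 0 ≤ f.derivative.eval 0) (h1 : g.derivative.eval 1 < 0)
    (ha : 0 < a) (hab : a < b) (hb : b < 1) (hga : g.eval a = a) (hfb : f.eval b = b) :
    f.derivative.eval b < g.derivative.eval a := by
  have hb1 : 0 < 1 - b := sub_pos.2 hb
  have ha1 : 0 < 1 - a := sub_pos.2 (hab.trans hb)
  have hsecant : g.derivative.eval 0 * (b - a) < 1 / (1 - b) - 1 / (1 - a) :=
    calc g.derivative.eval 0 * (b - a)
      _ < 1 / (1 - a) ^ 2 * (b - a) := by
        gcongr
        exact hg.derivative_zero_lt_of_fixedPt ⟨ha, hab.trans hb⟩ hga h1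
      _ ≤ 1 / ((1 - b) * (1 - a)) * (b - a) := by
        rw [sq]
        gcongr
      _ = 1 / (1 - b) - 1 / (1 - a) := by
        field_simp
        ring
  rw [hf.derivative_eval_of_fixedPt (ha.trans hab).ne' hb1.ne' hfb,
    hg.derivative_eval_of_fixedPt ha.ne' ha1.ne' hga]
  linarith [mul_le_mul_of_nonneg_right h0 hb1.le]

end Field

end IsEndpointCubic

section DilationConj

variable {K : Type*} [Field K] {p f g : K[X]} {a b : K}

/-- The conjugate `s ↦ p (a * s) / a` of `p` by the dilation with factor `a`. It moves a fixed
point `a ≠ 0` of `p` to `1`, so that two maps with different fixed points can be compared. -/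
noncomputable def dilationConj (a : K) (p : K[X]) : K[X] :=
  C a⁻¹ * p.comp (C a * X)

theorem eval_dilationConj (a : K) (p : K[X]) (s : K) :
    (dilationConj a p).eval s = p.eval (a * s) / a := by
  simp [dilationConj, div_eq_inv_mul]

theorem derivative_eval_dilationConj (ha : a ≠ 0) (s : K) :
    (dilationConj a p).derivative.eval s = p.derivative.eval (a * s) := by
  simp [dilationConj, derivative_comp, ha]

theorem natDegree_dilationConj_le (a : K) (p : K[X]) :
    (dilationConj a p).natDegree ≤ p.natDegree :=
  calc (dilationConj a p).natDegree
    _ ≤ (p.comp (C a * X)).natDegree := natDegree_C_mul_le _ _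
    _ ≤ p.natDegree * (C a * X).natDegree := natDegree_comp_le
    _ ≤ p.natDegree * 1 := Nat.mul_le_mul_left _ (natDegree_le_of_degree_le (degree_C_mul_X_le a))
    _ = p.natDegree := mul_one _

theorem isEndpointCubic_dilationConj_sub (hf : f.degree ≤ 3) (hg : g.degree ≤ 3)
    (hf0 : f.eval 0 = 0) (hg0 : g.eval 0 = 0) (ha : a ≠ 0) (hb : b ≠ 0)
    (hga : g.eval a = a) (hfb : f.eval b = b) :
    IsEndpointCubic (dilationConj b f - dilationConj a g) where
  degree_le := natDegree_le_iff_degree_le.1 <| natDegree_sub_le_of_le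
    ((natDegree_dilationConj_le b f).trans (natDegree_le_of_degree_le hf))
    ((natDegree_dilationConj_le a g).trans (natDegree_le_of_degree_le hg))
  eval_zero := by simp [eval_dilationConj, hf0, hg0]
  eval_one := by simp [eval_dilationConj, hga, hfb, ha, hb]

theorem eval_dilationConj_lt_eval_dilationConj [LinearOrder K] [IsStrictOrderedRing K]
    (hf : f.degree ≤ 3) (hg : g.degree ≤ 3) (hf0 : f.eval 0 = 0) (hg0 : g.eval 0 = 0)
    (ha : a ≠ 0) (hb : b ≠ 0) (hga : g.eval a = a) (hfb : f.eval b = b)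
    (h0 : g.derivative.eval 0 ≤ f.derivative.eval 0)
    (h1 : f.derivative.eval b < g.derivative.eval a) {s : K} (hs : s ∈ Ioo 0 1) :
    (dilationConj a g).eval s < (dilationConj b f).eval s := by
  have hslope (t : K) : (dilationConj b f - dilationConj a g).derivative.eval t =
      f.derivative.eval (b * t) - g.derivative.eval (a * t) := by
    rw [derivative_sub, eval_sub, derivative_eval_dilationConj hb, derivative_eval_dilationConj ha]
  have hslope_one : (dilationConj b f - dilationConj a g).derivative.eval 1 < 0 := by
    rw [hslope, mul_one, mul_one]
    exact sub_neg.2 h1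
  have hne : dilationConj b f - dilationConj a g ≠ 0 := by
    intro h
    simp [h] at hslope_one
  rw [← sub_pos, ← eval_sub]
  refine (isEndpointCubic_dilationConj_sub hf hg hf0 hg0 ha hb hga hfb).eval_pos hne ?_
    hslope_one.le hs
  rw [hslope, mul_zero, mul_zero]
  exact sub_nonneg.2 h0

end DilationConj

theorem derivative_mul_sub_nonneg_of_isMinOn {p : ℝ[X]} {s : Set ℝ} {a b : ℝ}
    (hmin : IsMinOn (fun x => p.eval x) s a) (hs : segment ℝ a b ⊆ s) :
    0 ≤ p.derivative.eval a * (b - a) := by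
  have hcone : b - a ∈ posTangentConeAt s a := sub_mem_posTangentConeAt_of_segment_subset hs
  simpa [mul_comm] using
    hmin.localize.hasFDerivWithinAt_nonneg (p.hasDerivAt a).hasFDerivAt.hasFDerivWithinAt hcone

theorem derivative_zero_nonneg_of_nonneg {p : ℝ[X]} (hp : ∀ x ∈ Icc (0 : ℝ) 1, 0 ≤ p.eval x)
    (h0 : p.eval 0 = 0) : 0 ≤ p.derivative.eval 0 := by
  have hmin : IsMinOn (fun x => p.eval x) (Icc 0 1) 0 := fun x hx => h0.trans_le (hp x hx)
  simpa using derivative_mul_sub_nonneg_of_isMinOn hmin (segment_eq_Icc zero_le_one).subset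

theorem derivative_zero_le_derivative_zero_of_le {p q : ℝ[X]}
    (hle : ∀ x ∈ Icc (0 : ℝ) 1, p.eval x ≤ q.eval x) (h0 : p.eval 0 = q.eval 0) :
    p.derivative.eval 0 ≤ q.derivative.eval 0 := by
  have h := derivative_zero_nonneg_of_nonneg (p := q - p)
    (fun x hx => by simpa using hle x hx) (by simp [h0])
  simpa using h

theorem derivative_one_nonpos_of_nonneg {p : ℝ[X]} (hp : ∀ x ∈ Icc (0 : ℝ) 1, 0 ≤ p.eval x)
    (h1 : p.eval 1 = 0) : p.derivative.eval 1 ≤ 0 := by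
  have hmin : IsMinOn (fun x => p.eval x) (Icc 0 1) 1 := fun x hx => h1.trans_le (hp x hx)
  have hseg : segment ℝ (1 : ℝ) 0 ⊆ Icc 0 1 := by
    rw [segment_symm, segment_eq_Icc zero_le_one]
  simpa using derivative_mul_sub_nonneg_of_isMinOn hmin hseg

theorem IsEndpointCubic.eval_lt_eval_of_le {p q : ℝ[X]} (hp : IsEndpointCubic p)
    (hq : IsEndpointCubic q) (hne : p ≠ q) (hle : ∀ x ∈ Icc (0 : ℝ) 1, p.eval x ≤ q.eval x)
    {x : ℝ} (hx : x ∈ Ioo 0 1) : p.eval x < q.eval x := by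
  have hqp : IsEndpointCubic (q - p) := hq.sub hp
  have hnonneg : ∀ y ∈ Icc (0 : ℝ) 1, 0 ≤ (q - p).eval y := fun y hy => by
    simpa using hle y hy
  rw [← sub_pos, ← eval_sub]
  exact hqp.eval_pos (sub_ne_zero.2 hne.symm)
    (derivative_zero_nonneg_of_nonneg hnonneg hqp.eval_zero)
    (derivative_one_nonpos_of_nonneg hnonneg hqp.eval_one) hx

theorem exists_fixedPt_mem_Ioo {α : Type*} [ConditionallyCompleteLinearOrder α]
    [DenselyOrdered α] [TopologicalSpace α] [OrderTopology α] {φ : α → α} {a b : α}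
    (hφ : ContinuousOn φ (Icc a b)) (hab : a ≤ b) (ha : a < φ a) (hb : φ b < b) :
    ∃ x ∈ Ioo a b, φ x = x := by
  obtain ⟨x, hx, hφx⟩ := exists_mem_Icc_isFixedPt hφ hab ha.le hb.le
  refine ⟨x, ⟨hx.1.lt_of_ne ?_, hx.2.lt_of_ne ?_⟩, hφx⟩
  · rintro rfl
    exact ha.ne' hφx
  · rintro rfl
    exact hb.ne hφx

theorem eq_of_fixedPt_of_antitoneOn {α : Type*} [LinearOrder α] {φ : α → α} {s : Set α} {x y : α}
    (hφ : AntitoneOn φ s) (hx : x ∈ s) (hy : y ∈ s) (hφx : φ x = x) (hφy : φ y = y) : x = y := by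
  wlog hxy : x ≤ y generalizing x y
  · exact (this hy hx hφy hφx (le_of_not_ge hxy)).symm
  · exact hxy.antisymm (by simpa only [hφx, hφy] using hφ hx hy hxy)

namespace HClass

variable {f g : ℝ[X]} {c cf cg : ℝ}

theorem isEndpointCubic (hf : HClass f c) : IsEndpointCubic f :=
  ⟨hf.deg, hf.f0, hf.f1⟩

theorem crit_mem_Ioo (hf : HClass f c) : c ∈ Ioo 0 1 := by
  obtain ⟨x, hx, hx'⟩ := exists_deriv_eq_zero zero_lt_one f.continuousOn (hf.f0.trans hf.f1.symm)
  rw [Polynomial.deriv] at hx'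
  rwa [← hf.uniq x (Ioo_subset_Icc_self hx) hx']

theorem derivative_zero_pos (hf : HClass f c) : 0 < f.derivative.eval 0 :=
  (derivative_zero_nonneg_of_nonneg hf.nonneg hf.f0).lt_of_ne' fun h =>
    hf.crit_mem_Ioo.1.ne (hf.uniq 0 (left_mem_Icc.2 zero_le_one) h)

theorem derivative_one_neg (hf : HClass f c) : f.derivative.eval 1 < 0 :=
  (derivative_one_nonpos_of_nonneg hf.nonneg hf.f1).lt_of_ne fun h =>
    hf.crit_mem_Ioo.2.ne' (hf.uniq 1 (right_mem_Icc.2 zero_le_one) h)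

theorem derivative_pos (hf : HClass f c) {x : ℝ} (hx : x ∈ Ico 0 c) : 0 < f.derivative.eval x := by
  by_contra! hneg
  obtain ⟨y, hy, hy'⟩ := intermediate_value_Icc' hx.1 f.derivative.continuousOn
    ⟨hneg, hf.derivative_zero_pos.le⟩
  have hyc : y = c := hf.uniq y ⟨hy.1, hy.2.trans (hx.2.le.trans hf.hc.2)⟩ hy'
  exact (hy.2.trans_lt hx.2).ne hyc

theorem derivative_neg (hf : HClass f c) {x : ℝ} (hx : x ∈ Ioc c 1) : f.derivative.eval x < 0 := by
  by_contra! hpos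
  obtain ⟨y, hy, hy'⟩ := intermediate_value_Icc' hx.2 f.derivative.continuousOn
    ⟨hf.derivative_one_neg.le, hpos⟩
  have hyc : y = c := hf.uniq y ⟨hf.hc.1.trans (hx.1.le.trans hy.1), hy.2⟩ hy'
  exact (hx.1.trans_le hy.1).ne' hyc

theorem derivative_nonpos (hf : HClass f c) {x : ℝ} (hx : x ∈ Icc c 1) :
    f.derivative.eval x ≤ 0 := by
  rcases hx.1.eq_or_lt with rfl | hcx
  · exact hf.crit.le
  · exact (hf.derivative_neg ⟨hcx, hx.2⟩).le

theorem crit_lt_of_derivative_neg (hf : HClass f c) {x : ℝ} (hx : 0 ≤ x)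
    (hneg : f.derivative.eval x < 0) : c < x := by
  by_contra! hxc
  rcases hxc.eq_or_lt with rfl | hxc
  · exact hneg.ne hf.crit
  · exact hneg.not_gt (hf.derivative_pos ⟨hx, hxc⟩)

theorem strictMonoOn (hf : HClass f c) : StrictMonoOn (fun x => f.eval x) (Icc 0 c) := by
  refine strictMonoOn_of_deriv_pos (convex_Icc 0 c) f.continuousOn fun x hx => ?_
  rw [interior_Icc] at hx
  rw [Polynomial.deriv]
  exact hf.derivative_pos (Ioo_subset_Ico_self hx)

theorem strictAntiOn (hf : HClass f c) : StrictAntiOn (fun x => f.eval x) (Icc c 1) := by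
  refine strictAntiOn_of_deriv_neg (convex_Icc c 1) f.continuousOn fun x hx => ?_
  rw [interior_Icc] at hx
  rw [Polynomial.deriv]
  exact hf.derivative_neg (Ioo_subset_Ioc_self hx)

theorem fixedPt_mem_Ioo (hf : HClass f c) {a : ℝ} (ha : a ∈ Icc c 1) (hfa : f.eval a = a) :
    a ∈ Ioo 0 1 := by
  refine ⟨hf.crit_mem_Ioo.1.trans_le ha.1, ha.2.lt_of_ne ?_⟩
  rintro rfl
  exact zero_ne_one (hf.f1.symm.trans hfa)

theorem div_lt_div_of_fixedPt (hf : HClass f cf) (hg : HClass g cg)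
    (h0 : g.derivative.eval 0 ≤ f.derivative.eval 0) {a b a' b' : ℝ}
    (h1 : f.derivative.eval b < g.derivative.eval a) (ha : cg ≤ a) (hb : cf < b)
    (hga : g.eval a = a) (hfb : f.eval b = b) (ha' : a' ∈ Icc 0 cg) (hb' : b' ∈ Icc 0 cf)
    (hga' : g.eval a' = a) (hfb' : f.eval b' = b) : a / a' < b / b' := by
  have ha0 : 0 < a := hg.crit_mem_Ioo.1.trans_le ha
  have hb0 : 0 < b := hf.crit_mem_Ioo.1.trans hb
  have ha'0 : 0 < a' := ha'.1.lt_of_ne (by rintro rfl; exact ha0.ne (hg.f0.symm.trans hga'))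
  have hb'0 : 0 < b' := hb'.1.lt_of_ne (by rintro rfl; exact hb0.ne (hf.f0.symm.trans hfb'))
  suffices b' < b * (a' / a) by
    rw [div_lt_div_iff₀ ha'0 hb'0, mul_comm a]
    rwa [mul_div_assoc', lt_div_iff₀ ha0] at this
  rcases (ha'.2.trans ha).eq_or_lt with rfl | haa'
  · rw [div_self ha0.ne', mul_one]
    exact hb'.2.trans_lt hb
  · have hlt := eval_dilationConj_lt_eval_dilationConj hf.deg hg.deg hf.f0 hg.f0 ha0.ne' hb0.ne'
      hga hfb h0 h1 ⟨div_pos ha'0 ha0, (div_lt_one ha0).2 haa'⟩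
    rw [eval_dilationConj, eval_dilationConj, mul_div_cancel₀ _ ha0.ne', hga', div_self ha0.ne',
      one_lt_div hb0] at hlt
    by_contra! hle
    have hmem : b * (a' / a) ∈ Icc 0 cf := ⟨by positivity, hle.trans hb'.2⟩
    exact hlt.not_ge ((hf.strictMonoOn.monotoneOn hmem hb' hle).trans_eq hfb')

end HClass

theorem stmt17_general {f g : ℝ[X]} {cf cg ag : ℝ} (hf : HClass f cf) (hg : HClass g cg)
    (h0 : g.derivative.eval 0 ≤ f.derivative.eval 0) (hag : ag ∈ Icc cg 1)
    (hgag : g.eval ag = ag) (hlt : ag < f.eval ag) :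
    ∃ af ∈ Icc cf 1, f.eval af = af ∧
      (∀ y ∈ Icc cf 1, f.eval y = y → y = af) ∧
      ag < af ∧
      f.derivative.eval af < g.derivative.eval ag ∧
      (∀ af' ∈ Icc (0 : ℝ) cf, f.eval af' = af →
        ∀ ag' ∈ Icc (0 : ℝ) cg, g.eval ag' = ag → ag / ag' < af / af') := by
  have hag0 : 0 < ag := (hg.fixedPt_mem_Ioo hag hgag).1
  obtain ⟨af, ⟨hab, haf1⟩, hfaf⟩ : ∃ x ∈ Ioo ag 1, f.eval x = x :=
    exists_fixedPt_mem_Ioo f.continuousOn hag.2 hlt (hf.f1.trans_lt zero_lt_one)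
  have hslope : f.derivative.eval af < g.derivative.eval ag :=
    hf.isEndpointCubic.derivative_lt_of_fixedPt_lt hg.isEndpointCubic h0 hg.derivative_one_neg
      hag0 hab haf1 hgag hfaf
  have hcaf : cf < af := hf.crit_lt_of_derivative_neg (hag0.trans hab).le
    (hslope.trans_le (hg.derivative_nonpos hag))
  have haf : af ∈ Icc cf 1 := ⟨hcaf.le, haf1.le⟩
  exact ⟨af, haf, hfaf,
    fun _ hy hfy => eq_of_fixedPt_of_antitoneOn hf.strictAntiOn.antitoneOn hy haf hfy hfaf,
    hab, hslope, fun _ haf' hfaf' _ hag' hgag' =>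
      hf.div_lt_div_of_fixedPt hg h0 hslope hag.1 hcaf hgag hfaf hag' haf' hgag' hfaf'⟩

theorem stmt17 (f g : Polynomial ℝ) (cf cg : ℝ) (hf : HClass f cf) (hg : HClass g cg)
    (hge : ∀ x ∈ Set.Icc (0:ℝ) 1, g.eval x ≤ f.eval x) (hfg : f ≠ g)
    (ag : ℝ) (hag : ag ∈ Set.Icc cg 1) (hgag : g.eval ag = ag) :
    ∃ af ∈ Set.Icc cf 1, f.eval af = af ∧
      (∀ y ∈ Set.Icc cf 1, f.eval y = y → y = af) ∧
      ag < af ∧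
      f.derivative.eval af ≤ g.derivative.eval ag ∧
      -- a_g/a'_g < a_f/a'_f, where a'_f, a'_g are the points on the other side of the
      -- turning points with f(a'_f) = a_f and g(a'_g) = a_g
      (∀ af' ∈ Set.Icc (0:ℝ) cf, f.eval af' = af →
        ∀ ag' ∈ Set.Icc (0:ℝ) cg, g.eval ag' = ag → ag / ag' < af / af') := by
  have hlt : ag < f.eval ag := hgag.symm.trans_lt <|
    hg.isEndpointCubic.eval_lt_eval_of_le hf.isEndpointCubic hfg.symm hge
      (hg.fixedPt_mem_Ioo hag hgag)
  have h0 : g.derivative.eval 0 ≤ f.derivative.eval 0 :=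
    derivative_zero_le_derivative_zero_of_le hge (hg.f0.trans hf.f0.symm)
  obtain ⟨af, haf, hfaf, huniq, hab, hslope, hratio⟩ := stmt17_general hf hg h0 hag hgag hlt
  exact ⟨af, haf, hfaf, huniq, hab, hslope.le, hratio⟩
end
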